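/- arXiv:1709.03218 — 4 statements merged into one kernel-verified Lean document; each statement's English description precedes it below -/
import Mathlib

section
/- Let d = 3. For every integer n ≥ 2, a(n,2) = 2·a(n,0) + (9n−10)·a(n−1,0) + 5·a(n−1,1) + 2·a(n−2,0). -/
/-- A generalized linear diagram on points `1,…,N` whose blocks all have size `d`:
a partition of `{1,…,N}` into blocks of size `d`. -/
def IsLinearDiagram (N d : ℕ) (P : Finset (Finset ℕ)) : Prop :=
  (∀ b ∈ P, b.card = d) ∧ (∀ b ∈ P, ∀ x ∈ b, x ∈ Finset.Icc 1 N) ∧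
    ∀ x ∈ Finset.Icc 1 N, ∃! b : Finset ℕ, b ∈ P ∧ x ∈ b

/-- The number of loops of a linear diagram on points `1,…,N`: indices `i` with
`1 ≤ i ≤ N - 1` such that `i` and `i + 1` lie in the same block. -/
noncomputable def linLoops (N : ℕ) (P : Finset (Finset ℕ)) : ℕ :=
  Set.ncard {i : ℕ | 1 ≤ i ∧ i + 1 ≤ N ∧ ∃ b ∈ P, i ∈ b ∧ i + 1 ∈ b}

/-- `numA d n k` : the number of generalized linear diagrams of order `(n,d)`
with exactly `k` loops. -/
noncomputable def numA (d n k : ℕ) : ℕ :=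
  Set.ncard {P : Finset (Finset ℕ) | IsLinearDiagram (n * d) d P ∧ linLoops (n * d) P = k}

/-- `numA` with an integer loop index, zero for negative indices. -/
noncomputable def numAZ (d n : ℕ) (k : ℤ) : ℕ :=
  if 0 ≤ k then numA d n k.toNat else 0

/-- Binomial coefficient with integer arguments: `0` when `y < 0` or `y > x`. -/
def iChoose (x y : ℤ) : ℕ :=
  if 0 ≤ y ∧ y ≤ x then x.toNat.choose y.toNat else 0

/-- A generalized chord diagram on `ZMod N` whose blocks all have size `d`:
a partition of `ZMod N` into blocks of size `d`. -/
def IsChordDiagram (N d : ℕ) (P : Finset (Finset (ZMod N))) : Prop :=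
  (∀ b ∈ P, b.card = d) ∧ ∀ x : ZMod N, ∃! b : Finset (ZMod N), b ∈ P ∧ x ∈ b

/-- A chord diagram is loopless if no residues `i`, `i+1` lie in the same block. -/
def ChordLoopless (N : ℕ) (P : Finset (Finset (ZMod N))) : Prop :=
  ∀ i : ZMod N, ∀ b ∈ P, i ∈ b → i + 1 ∈ b → False

/-- `numB d n` : the number of loopless generalized chord diagrams of order `(n,d)`. -/
noncomputable def numB (d n : ℕ) : ℕ :=
  Set.ncard {P : Finset (Finset (ZMod (n * d))) |
    IsChordDiagram (n * d) d P ∧ ChordLoopless (n * d) P}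

/-- The shift `i ↦ i + v` modulo `M`, on the representatives `1,…,M`. -/
def shiftMod (M v i : ℕ) : ℕ := if i + v ≤ M then i + v else i + v - M

/-- An `m`-symmetric linear diagram with sector size `v` and blocks of size `d`:
a partition of `{1,…,m·v}` into blocks of size `d` invariant under the shift by `v`
modulo `m·v`. -/
def IsMSymLinear (d m v : ℕ) (P : Finset (Finset ℕ)) : Prop :=
  IsLinearDiagram (m * v) d P ∧ ∀ b ∈ P, b.image (shiftMod (m * v) v) ∈ P

/-- The number of loops lying in sector `s` (sectors numbered from `0`):
indices `i` with `s·v + 1 ≤ i ≤ (s+1)·v - 1` such that `i` and `i + 1` lie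
in the same block. -/
noncomputable def sectorLoops (v : ℕ) (P : Finset (Finset ℕ)) (s : ℕ) : ℕ :=
  Set.ncard {i : ℕ | s * v + 1 ≤ i ∧ i + 1 ≤ (s + 1) * v ∧ ∃ b ∈ P, i ∈ b ∧ i + 1 ∈ b}

/-- `numAtil d m v k` : the number of `m`-symmetric linear diagrams with sector size `v`,
blocks of size `d`, and exactly `k` loops in each sector (`ã(v,k;m,d)`). -/
noncomputable def numAtil (d m v k : ℕ) : ℕ :=
  Set.ncard {P : Finset (Finset ℕ) |
    IsMSymLinear d m v P ∧ ∀ s < m, sectorLoops v P s = k}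
namespace LRT
open Finset

def IsPt (m : ℕ) (P : Finset (Finset ℕ)) : Prop :=
  (∀ b ∈ P, b.Nonempty ∧ b.card ≤ 3 ∧ ∀ x ∈ b, 1 ≤ x ∧ x ≤ m) ∧
  (∀ x, 1 ≤ x → x ≤ m → ∃ b ∈ P, x ∈ b) ∧
  (∀ b ∈ P, ∀ b' ∈ P, ∀ x, x ∈ b → x ∈ b' → b = b')

open Classical in
noncomputable def DD (m : ℕ) : Finset (Finset (Finset ℕ)) :=
  (Finset.Icc 1 m).powerset.powerset.filter (fun P => IsPt m P)

lemma mem_DD {m : ℕ} {P : Finset (Finset ℕ)} : P ∈ DD m ↔ IsPt m P := by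
  unfold DD
  classical
  rw [Finset.mem_filter]
  refine ⟨fun h => h.2, fun h => ⟨?_, h⟩⟩
  rw [Finset.mem_powerset]
  intro b hb
  rw [Finset.mem_powerset]
  intro x hx
  exact Finset.mem_Icc.2 ((h.1 b hb).2.2 x hx)

def join (m : ℕ) (P : Finset (Finset ℕ)) (b : Finset ℕ) : Finset (Finset ℕ) :=
  insert (insert (m+1) b) (P.erase b)

def ch (P : Finset (Finset ℕ)) : Finset (Finset ℕ) :=
  insert ∅ (P.filter (fun b => b.card < 3))

lemma mem_join {m : ℕ} {P : Finset (Finset ℕ)} {b x : Finset ℕ} :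
    x ∈ join m P b ↔ x = insert (m+1) b ∨ (x ≠ b ∧ x ∈ P) := by
  simp [join]

lemma mem_ch {P : Finset (Finset ℕ)} {b : Finset ℕ} :
    b ∈ ch P ↔ b = ∅ ∨ (b ∈ P ∧ b.card < 3) := by
  simp [ch]

lemma notin {m : ℕ} {P : Finset (Finset ℕ)} (h : IsPt m P) {b : Finset ℕ} (hb : b ∈ P) :
    m + 1 ∉ b := fun hx => by
  have := (h.1 b hb).2.2 _ hx
  omega

lemma notin_ch {m : ℕ} {P : Finset (Finset ℕ)} (h : IsPt m P) {b : Finset ℕ} (hb : b ∈ ch P) :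
    m + 1 ∉ b := by
  rcases mem_ch.1 hb with rfl | hb
  · simp
  · exact notin h hb.1

lemma empty_notin {m : ℕ} {P : Finset (Finset ℕ)} (h : IsPt m P) : ∅ ∉ P := fun hb => by
  simpa using (h.1 _ hb).1

lemma join_isPt {m : ℕ} {P : Finset (Finset ℕ)} (h : IsPt m P) {b : Finset ℕ} (hb : b ∈ ch P) :
    IsPt (m+1) (join m P b) := by
  have hmb := notin_ch h hb
  refine ⟨?_, ?_, ?_⟩
  · intro c hc
    rcases mem_join.1 hc with rfl | ⟨_, hc⟩
    · refine ⟨by simp, ?_, ?_⟩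
      · rw [Finset.card_insert_of_notMem hmb]
        rcases mem_ch.1 hb with rfl | hb
        · simp
        · omega
      · intro x hx
        rcases Finset.mem_insert.1 hx with rfl | hx
        · omega
        · rcases mem_ch.1 hb with rfl | hb
          · simp at hx
          · have := (h.1 b hb.1).2.2 x hx
            omega
    · obtain ⟨h1, h2, h3⟩ := h.1 c hc
      exact ⟨h1, h2, fun x hx => by have := h3 x hx; omega⟩
  · intro x hx1 hx2
    by_cases hx : x = m + 1
    · exact ⟨_, mem_join.2 (Or.inl rfl), by simp [hx]⟩
    · obtain ⟨c, hc, hxc⟩ := h.2.1 x hx1 (by omega)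
      by_cases hcb : c = b
      · subst hcb
        exact ⟨_, mem_join.2 (Or.inl rfl), by simp [hxc]⟩
      · exact ⟨c, mem_join.2 (Or.inr ⟨hcb, hc⟩), hxc⟩
  · have key : ∀ c ∈ P, c ≠ b → ∀ x, x ∈ insert (m+1) b → x ∈ c → False := by
      intro c hc hcb x hx hxc
      rcases Finset.mem_insert.1 hx with rfl | hx
      · exact notin h hc hxc
      · rcases mem_ch.1 hb with rfl | hb
        · simp at hx
        · exact hcb (h.2.2 c hc b hb.1 x hxc hx)
    intro c hc c' hc' x hx hx'
    rcases mem_join.1 hc with rfl | ⟨h1, hc⟩ <;> rcases mem_join.1 hc' with rfl | ⟨h2, hc'⟩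
    · rfl
    · exact (key _ hc' h2 x hx hx').elim
    · exact (key _ hc h1 x hx' hx).elim
    · exact h.2.2 c hc c' hc' x hx hx'

lemma join_inj {m : ℕ} {P P' : Finset (Finset ℕ)} (h : IsPt m P) (h' : IsPt m P')
    {b b' : Finset ℕ} (hb : b ∈ ch P) (hb' : b' ∈ ch P') (e : join m P b = join m P' b') :
    P = P' ∧ b = b' := by
  have hm := notin_ch h hb
  have hm' := notin_ch h' hb'
  have e1 : insert (m+1) b = insert (m+1) b' := by
    have : insert (m+1) b ∈ join m P' b' := e ▸ mem_join.2 (Or.inl rfl)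
    rcases mem_join.1 this with h1 | ⟨_, h1⟩
    · exact h1
    · exact (notin h' h1 (by simp)).elim
  have e2 : b = b' := by
    have := congrArg (fun s => Finset.erase s (m+1)) e1
    simpa [hm, hm'] using this
  subst e2
  refine ⟨?_, rfl⟩
  ext c
  by_cases hc : c = b
  · subst hc
    rcases mem_ch.1 hb with rfl | hb1
    · simp [empty_notin h, empty_notin h']
    · rcases mem_ch.1 hb' with rfl | hb2
      · simp [empty_notin h, empty_notin h']
      · simp [hb1.1, hb2.1]
  · have h1 : c ∈ join m P b ↔ c ∈ join m P' b := by rw [e]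
    rw [mem_join, mem_join] at h1
    constructor
    · intro hcP
      rcases h1.1 (Or.inr ⟨hc, hcP⟩) with rfl | h2
      · exact (notin h hcP (by simp)).elim
      · exact h2.2
    · intro hcP
      rcases h1.2 (Or.inr ⟨hc, hcP⟩) with rfl | h2
      · exact (notin h' hcP (by simp)).elim
      · exact h2.2

lemma join_surj {m : ℕ} {P : Finset (Finset ℕ)} (h : IsPt (m+1) P) :
    ∃ P0, IsPt m P0 ∧ ∃ b ∈ ch P0, join m P0 b = P := by
  obtain ⟨c, hc, hmc⟩ := h.2.1 (m+1) (by omega) le_rfl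
  have huniq : ∀ d ∈ P, m + 1 ∈ d → d = c := fun d hd hmd => h.2.2 d hd c hc _ hmd hmc
  have hins : insert (m+1) (c.erase (m+1)) = c := Finset.insert_erase hmc
  have hcard : (c.erase (m+1)).card + 1 = c.card := Finset.card_erase_add_one hmc
  have hc3 := (h.1 c hc).2.1
  have hbP : ∀ x ∈ c.erase (m+1), ∀ d ∈ P, x ∈ d → d = c := by
    intro x hx d hd hxd
    exact h.2.2 d hd c hc x hxd (Finset.mem_of_mem_erase hx)
  by_cases hb : c.erase (m+1) = ∅
  · refine ⟨P.erase c, ⟨?_, ?_, ?_⟩, ∅, mem_ch.2 (Or.inl rfl), ?_⟩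
    · intro d hd
      rw [Finset.mem_erase] at hd
      obtain ⟨h1, h2, h3⟩ := h.1 d hd.2
      refine ⟨h1, h2, fun x hx => ?_⟩
      have := h3 x hx
      have : x ≠ m + 1 := by
        rintro rfl
        exact hd.1 (huniq d hd.2 hx)
      omega
    · intro x h1 h2
      obtain ⟨d, hd, hxd⟩ := h.2.1 x h1 (by omega)
      refine ⟨d, Finset.mem_erase.2 ⟨?_, hd⟩, hxd⟩
      rintro rfl
      have : x ∈ d.erase (m+1) := Finset.mem_erase.2 ⟨by omega, hxd⟩
      simp [hb] at this
    · intro d hd d' hd'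
      exact h.2.2 d (Finset.mem_of_mem_erase hd) d' (Finset.mem_of_mem_erase hd')
    · have : ∅ ∉ P.erase c := fun h0 => empty_notin h (Finset.mem_of_mem_erase h0)
      rw [join, Finset.erase_eq_of_notMem this, ← hb, hins, Finset.insert_erase hc]
  · have hne : (c.erase (m+1)).Nonempty := Finset.nonempty_iff_ne_empty.2 hb
    have hnot : c.erase (m+1) ∉ P.erase c := by
      intro h0
      obtain ⟨x, hx⟩ := hne
      rw [Finset.mem_erase] at h0
      exact h0.1 (hbP x hx _ h0.2 hx)
    refine ⟨insert (c.erase (m+1)) (P.erase c), ⟨?_, ?_, ?_⟩, c.erase (m+1),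
      mem_ch.2 (Or.inr ⟨by simp, by omega⟩), ?_⟩
    · intro d hd
      rcases Finset.mem_insert.1 hd with rfl | hd
      · refine ⟨hne, by omega, fun x hx => ?_⟩
        rw [Finset.mem_erase] at hx
        have := (h.1 c hc).2.2 x hx.2
        omega
      · rw [Finset.mem_erase] at hd
        obtain ⟨h1, h2, h3⟩ := h.1 d hd.2
        refine ⟨h1, h2, fun x hx => ?_⟩
        have := h3 x hx
        have : x ≠ m + 1 := by
          rintro rfl
          exact hd.1 (huniq d hd.2 hx)
        omega
    · intro x h1 h2
      obtain ⟨d, hd, hxd⟩ := h.2.1 x h1 (by omega)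
      by_cases hdc : d = c
      · subst hdc
        exact ⟨d.erase (m+1), by simp, Finset.mem_erase.2 ⟨by omega, hxd⟩⟩
      · exact ⟨d, by simp [hdc, hd], hxd⟩
    · intro d hd d' hd' x hx hx'
      rcases Finset.mem_insert.1 hd with rfl | hd <;> rcases Finset.mem_insert.1 hd' with rfl | hd'
      · rfl
      · rw [Finset.mem_erase] at hd'
        exact (hd'.1 (hbP x hx d' hd'.2 hx')).elim
      · rw [Finset.mem_erase] at hd
        exact (hd.1 (hbP x hx' d hd.2 hx)).elim
      · exact h.2.2 d (Finset.mem_of_mem_erase hd) d' (Finset.mem_of_mem_erase hd') x hx hx'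
    · rw [join, hins, Finset.erase_insert hnot, Finset.insert_erase hc]

lemma sum_DD_succ {R : Type*} [AddCommMonoid R] (m : ℕ) (φ : Finset (Finset ℕ) → R) :
    ∑ P ∈ DD (m+1), φ P = ∑ P ∈ DD m, ∑ b ∈ ch P, φ (join m P b) := by
  rw [Finset.sum_sigma']
  symm
  refine Finset.sum_bij (fun a _ => join m a.1 a.2) ?_ ?_ ?_ ?_
  · rintro ⟨P, b⟩ ha
    rw [Finset.mem_sigma, mem_DD] at ha
    exact mem_DD.2 (join_isPt ha.1 ha.2)
  · rintro ⟨P, b⟩ ha ⟨P', b'⟩ ha' e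
    rw [Finset.mem_sigma, mem_DD] at ha ha'
    obtain ⟨h1, h2⟩ := join_inj ha.1 ha'.1 ha.2 ha'.2 e
    dsimp only at h1 h2
    subst h1 h2
    rfl
  · intro P hP
    obtain ⟨P0, h0, b, hb, e⟩ := join_surj (mem_DD.1 hP)
    exact ⟨⟨P0, b⟩, Finset.mem_sigma.2 ⟨mem_DD.2 h0, hb⟩, e⟩
  · intros
    rfl

/-- number of blocks of size `i` -/
def cn (i : ℕ) (P : Finset (Finset ℕ)) : ℕ := (P.filter (fun b => b.card = i)).card

/-- size of the block containing `m` -/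
def ls (m : ℕ) (P : Finset (Finset ℕ)) : ℕ := ∑ b ∈ P.filter (fun b => m ∈ b), b.card

lemma ls_eq {m : ℕ} {P : Finset (Finset ℕ)} {M : ℕ} (h : IsPt M P) {b : Finset ℕ} (hb : b ∈ P)
    (hm : m ∈ b) : ls m P = b.card := by
  have : P.filter (fun b => m ∈ b) = {b} := by
    ext c
    simp only [Finset.mem_filter, Finset.mem_singleton]
    constructor
    · rintro ⟨h1, h2⟩
      exact h.2.2 c h1 b hb m h2 hm
    · rintro rfl
      exact ⟨hb, hm⟩
  simp [ls, this]

lemma ls_join {m : ℕ} {P : Finset (Finset ℕ)} (h : IsPt m P) {b : Finset ℕ} (hb : b ∈ ch P) :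
    ls (m+1) (join m P b) = b.card + 1 := by
  rw [ls_eq (join_isPt h hb) (mem_join.2 (Or.inl rfl)) (by simp),
    Finset.card_insert_of_notMem (notin_ch h hb)]

lemma cn_join {m : ℕ} {P : Finset (Finset ℕ)} (h : IsPt m P) {b : Finset ℕ} (hb : b ∈ ch P)
    {i : ℕ} (hi : 1 ≤ i) :
    cn i (join m P b) + (if b.card = i then 1 else 0) =
      cn i P + (if b.card + 1 = i then 1 else 0) := by
  have hm := notin_ch h hb
  have hn : insert (m+1) b ∉ P.erase b := fun h0 =>
    notin h (Finset.mem_of_mem_erase h0) (by simp)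
  have hcard := Finset.card_insert_of_notMem hm
  have e1 : cn i (join m P b) = cn i (P.erase b) + (if b.card + 1 = i then 1 else 0) := by
    unfold cn join
    rw [Finset.filter_insert, hcard]
    split_ifs
    · rw [Finset.card_insert_of_notMem]
      intro h0
      exact hn (Finset.mem_filter.1 h0).1
    · rfl
  have e2 : cn i (P.erase b) + (if b.card = i then 1 else 0) = cn i P := by
    unfold cn
    rw [Finset.filter_erase]
    rcases mem_ch.1 hb with rfl | hb
    · rw [Finset.erase_eq_of_notMem]
      · rw [if_neg (by simp; omega), add_zero]
      · intro h0
        exact empty_notin h (Finset.mem_filter.1 h0).1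
    · split_ifs with hh
      · exact Finset.card_erase_add_one (Finset.mem_filter.2 ⟨hb.1, hh⟩)
      · rw [Finset.erase_eq_of_notMem]
        · rfl
        · intro h0
          exact hh (Finset.mem_filter.1 h0).2
  omega

lemma loops_join {m : ℕ} {P : Finset (Finset ℕ)} (h : IsPt m P) {b : Finset ℕ} (hb : b ∈ ch P) :
    linLoops (m+1) (join m P b) = linLoops m P + (if m ∈ b then 1 else 0) := by
  have hm := notin_ch h hb
  have key : ∀ i, i + 1 ≤ m → ((∃ c ∈ join m P b, i ∈ c ∧ i + 1 ∈ c) ↔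
      ∃ c ∈ P, i ∈ c ∧ i + 1 ∈ c) := by
    intro i hi
    constructor
    · rintro ⟨c, hc, h1, h2⟩
      rcases mem_join.1 hc with rfl | ⟨_, hc⟩
      · rw [Finset.mem_insert] at h1 h2
        have h1 := h1.resolve_left (by omega)
        have h2 := h2.resolve_left (by omega)
        rcases mem_ch.1 hb with rfl | hb
        · simp at h1
        · exact ⟨b, hb.1, h1, h2⟩
      · exact ⟨c, hc, h1, h2⟩
    · rintro ⟨c, hc, h1, h2⟩
      by_cases hcb : c = b
      · subst hcb
        exact ⟨_, mem_join.2 (Or.inl rfl), by simp [h1], by simp [h2]⟩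
      · exact ⟨c, mem_join.2 (Or.inr ⟨hcb, hc⟩), h1, h2⟩
  have keym : (∃ c ∈ join m P b, m ∈ c ∧ m + 1 ∈ c) ↔ m ∈ b := by
    constructor
    · rintro ⟨c, hc, h1, h2⟩
      rcases mem_join.1 hc with rfl | ⟨_, hc⟩
      · rw [Finset.mem_insert] at h1
        exact h1.resolve_left (by omega)
      · exact (notin h hc h2).elim
    · intro h1
      exact ⟨_, mem_join.2 (Or.inl rfl), by simp [h1], by simp⟩
  have hfin : {i : ℕ | 1 ≤ i ∧ i + 1 ≤ m ∧ ∃ b ∈ P, i ∈ b ∧ i + 1 ∈ b}.Finite :=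
    (Set.finite_Iic m).subset (fun i hi => by have := hi.2.1; simp only [Set.mem_Iic]; omega)
  unfold linLoops
  split_ifs with hmb
  · have hm1 : 1 ≤ m := by
      rcases mem_ch.1 hb with rfl | hb
      · simp at hmb
      · exact ((h.1 b hb.1).2.2 m hmb).1
    rw [← Set.ncard_insert_of_notMem (a := m) _ hfin]
    · congr 1
      ext i
      simp only [Set.mem_ofPred_eq, Set.mem_insert_iff]
      by_cases him : i = m
      · subst him
        simp only [keym]
        simp [hmb, hm1]
      · constructor
        · rintro ⟨h1, h2, h3⟩
          exact Or.inr ⟨h1, by omega, (key i (by omega)).1 h3⟩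
        · rintro (h1 | ⟨h1, h2, h3⟩)
          · exact (him h1).elim
          · exact ⟨h1, by omega, (key i (by omega)).2 h3⟩
    · simp only [Set.mem_ofPred_eq]
      omega
  · rw [add_zero]
    congr 1
    ext i
    simp only [Set.mem_ofPred_eq]
    constructor
    · rintro ⟨h1, h2, h3⟩
      have : i ≠ m := by
        rintro rfl
        exact hmb (keym.1 h3)
      exact ⟨h1, by omega, (key i (by omega)).1 h3⟩
    · rintro ⟨h1, h2, h3⟩
      exact ⟨h1, by omega, (key i (by omega)).2 h3⟩

lemma cn_pos_of_ls {m : ℕ} {P : Finset (Finset ℕ)} {j : ℕ} (hj : 1 ≤ j)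
    (h : ls m P = j) (hP : IsPt m P) : 1 ≤ cn j P := by
  by_cases he : ∃ b ∈ P, m ∈ b
  · obtain ⟨b, hb, hm⟩ := he
    rw [ls_eq hP hb hm] at h
    exact Finset.card_pos.2 ⟨b, Finset.mem_filter.2 ⟨hb, h⟩⟩
  · have : P.filter (fun b => m ∈ b) = ∅ := by
      apply Finset.filter_eq_empty_iff.2
      intro b hb hm
      exact he ⟨b, hb, hm⟩
    simp [ls, this] at h
    omega

lemma inner_sum {R : Type*} [CommRing R] (x : R) {m : ℕ} {P : Finset (Finset ℕ)} (hP : IsPt m P)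
    {j : ℕ} (hj : 1 ≤ j) :
    ∑ b ∈ P.filter (fun b => b.card = j), x ^ (if m ∈ b then 1 else 0) =
      (cn j P : R) + (x - 1) * (if ls m P = j then 1 else 0) := by
  have e : ∀ b : Finset ℕ, x ^ (if m ∈ b then 1 else 0) =
      1 + (x - 1) * (if m ∈ b then 1 else 0) := by
    intro b
    split_ifs <;> simp
  simp only [e]
  rw [Finset.sum_add_distrib, ← Finset.mul_sum]
  have e2 : ∑ b ∈ P.filter (fun b => b.card = j), (if m ∈ b then (1:R) else 0) =
      if ls m P = j then 1 else 0 := by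
    by_cases he : ∃ b ∈ P, m ∈ b
    · obtain ⟨b, hb, hm⟩ := he
      rw [ls_eq hP hb hm]
      have : ∀ c ∈ P.filter (fun b => b.card = j), (if m ∈ c then (1:R) else 0) =
          if b = c then 1 else 0 := by
        intro c hc
        have : m ∈ c ↔ b = c := by
          constructor
          · intro h
            exact hP.2.2 b hb c (Finset.mem_filter.1 hc).1 m hm h
          · rintro rfl
            exact hm
        simp only [this]
      rw [Finset.sum_congr rfl this, Finset.sum_ite_eq]
      simp [hb]
    · have h0 : P.filter (fun b => m ∈ b) = ∅ := by
        apply Finset.filter_eq_empty_iff.2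
        intro b hb hm
        exact he ⟨b, hb, hm⟩
      have : ls m P = 0 := by simp [ls, h0]
      rw [this, if_neg (by omega)]
      apply Finset.sum_eq_zero
      intro b hb
      rw [if_neg]
      exact fun hm => he ⟨b, (Finset.mem_filter.1 hb).1, hm⟩
  rw [e2]
  simp [cn]

lemma step {R : Type*} [CommRing R] (x : R) (ψ : ℕ → ℕ → ℕ → ℕ → R) (m : ℕ) :
    ∑ P ∈ DD (m+1), ψ (cn 1 P) (cn 2 P) (cn 3 P) (ls (m+1) P) * x ^ linLoops (m+1) P =
    ∑ P ∈ DD m, (ψ (cn 1 P + 1) (cn 2 P) (cn 3 P) 1 +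
      ((cn 1 P : R) + (x - 1) * (if ls m P = 1 then 1 else 0)) *
        ψ (cn 1 P - 1) (cn 2 P + 1) (cn 3 P) 2 +
      ((cn 2 P : R) + (x - 1) * (if ls m P = 2 then 1 else 0)) *
        ψ (cn 1 P) (cn 2 P - 1) (cn 3 P + 1) 3) * x ^ linLoops m P := by
  rw [sum_DD_succ]
  apply Finset.sum_congr rfl
  intro P hP
  have hP := mem_DD.1 hP
  have hsplit : P.filter (fun b => b.card < 3) =
      P.filter (fun b => b.card = 1) ∪ P.filter (fun b => b.card = 2) := by
    ext b
    simp only [Finset.mem_filter, Finset.mem_union]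
    constructor
    · rintro ⟨h1, h2⟩
      have := Finset.card_pos.2 (hP.1 b h1).1
      have : b.card = 1 ∨ b.card = 2 := by omega
      tauto
    · rintro (⟨h1, h2⟩ | ⟨h1, h2⟩) <;> exact ⟨h1, by omega⟩
  have hdisj : Disjoint (P.filter (fun b => b.card = 1)) (P.filter (fun b => b.card = 2)) := by
    rw [Finset.disjoint_filter]
    intro b _ h1 h2
    omega
  have hnot : ∅ ∉ P.filter (fun b => b.card < 3) := fun h0 =>
    empty_notin hP (Finset.mem_filter.1 h0).1
  rw [ch, Finset.sum_insert hnot, hsplit, Finset.sum_union hdisj]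
  have t0 : ψ (cn 1 (join m P ∅)) (cn 2 (join m P ∅)) (cn 3 (join m P ∅)) (ls (m+1) (join m P ∅))
      * x ^ linLoops (m+1) (join m P ∅) =
      ψ (cn 1 P + 1) (cn 2 P) (cn 3 P) 1 * x ^ linLoops m P := by
    have hb : ∅ ∈ ch P := mem_ch.2 (Or.inl rfl)
    have h1 := cn_join hP hb (i := 1) (by omega)
    have h2 := cn_join hP hb (i := 2) (by omega)
    have h3 := cn_join hP hb (i := 3) (by omega)
    simp at h1 h2 h3
    rw [h1, h2, h3, ls_join hP hb, loops_join hP hb]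
    simp
  have t1 : ∀ b ∈ P.filter (fun b => b.card = 1),
      ψ (cn 1 (join m P b)) (cn 2 (join m P b)) (cn 3 (join m P b)) (ls (m+1) (join m P b))
      * x ^ linLoops (m+1) (join m P b) =
      (ψ (cn 1 P - 1) (cn 2 P + 1) (cn 3 P) 2 * x ^ linLoops m P) *
        x ^ (if m ∈ b then 1 else 0) := by
    intro b hb
    obtain ⟨hbP, hc⟩ := Finset.mem_filter.1 hb
    have hb : b ∈ ch P := mem_ch.2 (Or.inr ⟨hbP, by omega⟩)
    have h1 := cn_join hP hb (i := 1) (by omega)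
    have h2 := cn_join hP hb (i := 2) (by omega)
    have h3 := cn_join hP hb (i := 3) (by omega)
    simp [hc] at h1 h2 h3
    rw [← h1, h2, h3, ls_join hP hb, loops_join hP hb, hc, pow_add, mul_assoc]
    simp
  have t2 : ∀ b ∈ P.filter (fun b => b.card = 2),
      ψ (cn 1 (join m P b)) (cn 2 (join m P b)) (cn 3 (join m P b)) (ls (m+1) (join m P b))
      * x ^ linLoops (m+1) (join m P b) =
      (ψ (cn 1 P) (cn 2 P - 1) (cn 3 P + 1) 3 * x ^ linLoops m P) *
        x ^ (if m ∈ b then 1 else 0) := by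
    intro b hb
    obtain ⟨hbP, hc⟩ := Finset.mem_filter.1 hb
    have hb : b ∈ ch P := mem_ch.2 (Or.inr ⟨hbP, by omega⟩)
    have h1 := cn_join hP hb (i := 1) (by omega)
    have h2 := cn_join hP hb (i := 2) (by omega)
    have h3 := cn_join hP hb (i := 3) (by omega)
    simp [hc] at h1 h2 h3
    rw [h1, ← h2, h3, ls_join hP hb, loops_join hP hb, hc, pow_add, mul_assoc]
    simp
  rw [t0, Finset.sum_congr rfl t1, Finset.sum_congr rfl t2, ← Finset.mul_sum, ← Finset.mul_sum,
    inner_sum x hP le_rfl, inner_sum x hP (by omega)]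
  ring

/-- weighted count by type -/
noncomputable def F {R : Type*} [CommRing R] (x : R) (m a b c : ℕ) : R :=
  ∑ P ∈ DD m, (if cn 1 P = a ∧ cn 2 P = b ∧ cn 3 P = c then 1 else 0) * x ^ linLoops m P

/-- weighted count by type and size of last block -/
noncomputable def G {R : Type*} [CommRing R] (x : R) (j m a b c : ℕ) : R :=
  ∑ P ∈ DD m, (if cn 1 P = a ∧ cn 2 P = b ∧ cn 3 P = c ∧ ls m P = j then 1 else 0) *
    x ^ linLoops m P

section rec
variable {R : Type*} [CommRing R] (x : R) (m a b c : ℕ)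

lemma F_succ : F x (m+1) a b c = G x 1 (m+1) a b c + G x 2 (m+1) a b c + G x 3 (m+1) a b c := by
  unfold F G
  rw [step x (fun p q r _ => if p = a ∧ q = b ∧ r = c then 1 else 0),
    step x (fun p q r s => if p = a ∧ q = b ∧ r = c ∧ s = 1 then 1 else 0),
    step x (fun p q r s => if p = a ∧ q = b ∧ r = c ∧ s = 2 then 1 else 0),
    step x (fun p q r s => if p = a ∧ q = b ∧ r = c ∧ s = 3 then 1 else 0),
    ← Finset.sum_add_distrib, ← Finset.sum_add_distrib]
  apply Finset.sum_congr rfl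
  intro P _
  simp [-mul_ite, -ite_mul]
  ring

lemma G1_zero : G x 1 (m+1) 0 b c = 0 := by
  unfold G
  rw [step x (fun p q r s => if p = 0 ∧ q = b ∧ r = c ∧ s = 1 then 1 else 0)]
  simp

lemma G1_succ : G x 1 (m+1) (a+1) b c = F x m a b c := by
  unfold F G
  rw [step x (fun p q r s => if p = a+1 ∧ q = b ∧ r = c ∧ s = 1 then 1 else 0)]
  simp

lemma G2_zero : G x 2 (m+1) a 0 c = 0 := by
  unfold G
  rw [step x (fun p q r s => if p = a ∧ q = 0 ∧ r = c ∧ s = 2 then 1 else 0)]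
  simp

lemma G2_succ : G x 2 (m+1) a (b+1) c =
    (a+1) * F x m (a+1) b c + (x - 1) * G x 1 m (a+1) b c := by
  unfold F G
  rw [step x (fun p q r s => if p = a ∧ q = b+1 ∧ r = c ∧ s = 2 then 1 else 0),
    Finset.mul_sum, Finset.mul_sum, ← Finset.sum_add_distrib]
  apply Finset.sum_congr rfl
  intro P hP
  have h1 := cn_pos_of_ls (j := 1) le_rfl (P := P) (m := m)
  rcases Nat.eq_zero_or_pos (cn 1 P) with h0 | h0
  · have : ls m P ≠ 1 := fun h => by
      have := h1 h (mem_DD.1 hP)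
      omega
    simp [h0, this]
  · obtain ⟨t, ht⟩ := Nat.exists_eq_add_of_le' h0
    by_cases hh : t = a ∧ cn 2 P = b ∧ cn 3 P = c
    · obtain ⟨r1, r2, r3⟩ := hh
      by_cases hl : ls m P = 1 <;> (simp [ht, r1, r2, r3, hl]; try ring)
    · have : ¬ (t = a ∧ cn 2 P = b ∧ cn 3 P = c ∧ ls m P = 1) := by tauto
      simp [ht, hh, this]

lemma G3_zero : G x 3 (m+1) a b 0 = 0 := by
  unfold G
  rw [step x (fun p q r s => if p = a ∧ q = b ∧ r = 0 ∧ s = 3 then 1 else 0)]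
  simp

lemma G3_succ : G x 3 (m+1) a b (c+1) =
    (b+1) * F x m a (b+1) c + (x - 1) * G x 2 m a (b+1) c := by
  unfold F G
  rw [step x (fun p q r s => if p = a ∧ q = b ∧ r = c+1 ∧ s = 3 then 1 else 0),
    Finset.mul_sum, Finset.mul_sum, ← Finset.sum_add_distrib]
  apply Finset.sum_congr rfl
  intro P hP
  have h1 := cn_pos_of_ls (j := 2) (by omega) (P := P) (m := m)
  rcases Nat.eq_zero_or_pos (cn 2 P) with h0 | h0
  · have : ls m P ≠ 2 := fun h => by
      have := h1 h (mem_DD.1 hP)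
      omega
    simp [h0, this]
  · obtain ⟨t, ht⟩ := Nat.exists_eq_add_of_le' h0
    by_cases hh : cn 1 P = a ∧ t = b ∧ cn 3 P = c
    · obtain ⟨r1, r2, r3⟩ := hh
      by_cases hl : ls m P = 2 <;> (simp [ht, r1, r2, r3, hl]; try ring)
    · have : ¬ (cn 1 P = a ∧ t = b ∧ cn 3 P = c ∧ ls m P = 2) := by tauto
      simp [ht, hh, this]

lemma DD_zero : DD 0 = {∅} := by
  ext P
  rw [mem_DD, Finset.mem_singleton]
  constructor
  · intro h
    apply Finset.eq_empty_of_forall_notMem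
    intro b hb
    obtain ⟨⟨y, hy⟩, _, h3⟩ := h.1 b hb
    have := h3 y hy
    omega
  · rintro rfl
    refine ⟨by simp, ?_, by simp⟩
    intro y h1 h2
    omega

lemma F_zero : F x 0 0 0 0 = 1 := by
  unfold F
  rw [DD_zero, Finset.sum_singleton]
  simp [cn, linLoops]

lemma G_zero (j : ℕ) (hj : 1 ≤ j) : G x j 0 a b c = 0 := by
  unfold G
  rw [DD_zero]
  simp [ls]
  omega

end rec

section alg
open Polynomial

noncomputable def L (S : Type*) [CommRing S] : S[X] →ₗ[S] S :=
  Polynomial.lsum (fun n => (n.factorial : S) • LinearMap.id)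

lemma L_monomial {S : Type*} [CommRing S] (n : ℕ) (a : S) :
    L S (monomial n a) = n.factorial * a := by
  simp [L, Polynomial.lsum_apply, Polynomial.sum_monomial_index]

lemma L_derivative {S : Type*} [CommRing S] (f : S[X]) :
    L S (derivative f) = L S f - f.coeff 0 := by
  induction f using Polynomial.induction_on' with
  | add p q hp hq => simp only [map_add, hp, hq, coeff_add]; ring
  | monomial n a =>
    cases n with
    | zero => rw [derivative_monomial, L_monomial, L_monomial]; simp
    | succ n =>
      rw [derivative_monomial_succ, L_monomial, L_monomial, coeff_monomial, if_neg (by omega),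
        Nat.factorial_succ]
      push_cast
      ring

lemma L_C_mul {S : Type*} [CommRing S] (a : S) (f : S[X]) :
    L S (C a * f) = a * L S f := by
  rw [← smul_eq_C_mul, map_smul, smul_eq_mul]

lemma L_one {S : Type*} [CommRing S] : L S 1 = 1 := by
  have := L_monomial (S := S) 0 1
  simpa using this

lemma L_map (p : ℚ[X]) : L ℚ[X] (p.map C) = C (L ℚ p) := by
  induction p using Polynomial.induction_on' with
  | add p q hp hq => simp only [map_add, hp, hq, Polynomial.map_add]
  | monomial n a =>
    rw [Polynomial.map_monomial, L_monomial, L_monomial]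
    simp

section claim
variable {S : Type*} [CommRing S] (x h2 h6 : S)

noncomputable def q2 : S[X] := C h2 * X ^ 2 + C (x - 1) * X
noncomputable def q3 : S[X] := C h6 * X ^ 3 + C (x - 1) * X ^ 2 + C ((x - 1) ^ 2) * X

lemma q2_der (h : 2 * h2 = 1) : derivative (q2 x h2) = X + C (x - 1) := by
  have h' : (2 : S[X]) * C h2 = 1 := by
    rw [← C_1, ← h, C_mul]; rfl
  simp only [q2, derivative_add, derivative_mul, derivative_C, derivative_X_pow, derivative_X]
  simp [show (C 2 : S[X]) = 2 from rfl, show (C 3 : S[X]) = 3 from rfl]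
  linear_combination X * h'

lemma q3_der (h : 2 * h2 = 1) (h' : 6 * h6 = 1) :
    derivative (q3 x h6) = q2 x h2 + C (x - 1) * (X + C (x - 1)) := by
  have e1 : (2 : S[X]) * C h2 = 1 := by
    rw [← C_1, ← h, C_mul]; rfl
  have e2 : (6 : S[X]) * C h6 = 1 := by
    rw [← C_1, ← h', C_mul]; rfl
  simp only [q3, q2, derivative_add, derivative_mul, derivative_C, derivative_X_pow, derivative_X]
  simp [show (C 2 : S[X]) = 2 from rfl, show (C 3 : S[X]) = 3 from rfl]
  linear_combination (-3 * C h6 * X ^ 2 ) * e1 + C h2 * X ^2 * e2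

lemma claim (h : 2 * h2 = 1) (h' : 6 * h6 = 1) (m : ℕ) : ∀ a b c, a + 2 * b + 3 * c = m →
    (F x m a b c * (a.factorial * b.factorial * c.factorial) =
      L S (X ^ a * q2 x h2 ^ b * q3 x h6 ^ c)) ∧
    (∀ a', a = a' + 1 → G x 1 m a b c * (a'.factorial * b.factorial * c.factorial) =
      L S (X ^ a' * q2 x h2 ^ b * q3 x h6 ^ c)) ∧
    (∀ b', b = b' + 1 → G x 2 m a b c * (a.factorial * b'.factorial * c.factorial) =
      L S (X ^ a * q2 x h2 ^ b' * q3 x h6 ^ c * (X + C (x - 1)))) := by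
  induction m with
  | zero =>
    intro a b c habc
    obtain rfl : a = 0 := by omega
    obtain rfl : b = 0 := by omega
    obtain rfl : c = 0 := by omega
    refine ⟨?_, fun _ h => by omega, fun _ h => by omega⟩
    rw [F_zero]
    simp [L_one]
  | succ m ih =>
    have H1 : ∀ a b c, (a + 1) + 2 * b + 3 * c = m + 1 →
        G x 1 (m+1) (a+1) b c * (a.factorial * b.factorial * c.factorial) =
          L S (X ^ a * q2 x h2 ^ b * q3 x h6 ^ c) := by
      intro a b c habc
      rw [G1_succ, (ih a b c (by omega)).1]
    have H2 : ∀ a b c, a + 2 * (b + 1) + 3 * c = m + 1 →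
        G x 2 (m+1) a (b+1) c * (a.factorial * b.factorial * c.factorial) =
          L S (X ^ a * q2 x h2 ^ b * q3 x h6 ^ c * (X + C (x - 1))) := by
      intro a b c habc
      obtain ⟨i1, i2, -⟩ := ih (a+1) b c (by omega)
      have i2 := i2 a rfl
      rw [G2_succ]
      rw [Nat.factorial_succ] at i1
      push_cast at i1
      have : X ^ a * q2 x h2 ^ b * q3 x h6 ^ c * (X + C (x - 1)) =
        X ^ (a + 1) * q2 x h2 ^ b * q3 x h6 ^ c +
          C (x - 1) * (X ^ a * q2 x h2 ^ b * q3 x h6 ^ c) := by ring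
      rw [this, map_add, L_C_mul, ← i1, ← i2]
      ring
    have H3 : ∀ a b c, a + 2 * b + 3 * (c + 1) = m + 1 →
        G x 3 (m+1) a b (c+1) * (a.factorial * b.factorial * c.factorial) =
          L S (X ^ a * q2 x h2 ^ b * q3 x h6 ^ c * (q2 x h2 + C (x - 1) * (X + C (x - 1)))) := by
      intro a b c habc
      obtain ⟨i1, -, i2⟩ := ih a (b+1) c (by omega)
      have i2 := i2 b rfl
      rw [G3_succ]
      rw [Nat.factorial_succ] at i1
      push_cast at i1
      have : X ^ a * q2 x h2 ^ b * q3 x h6 ^ c * (q2 x h2 + C (x - 1) * (X + C (x - 1))) =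
        X ^ a * q2 x h2 ^ (b + 1) * q3 x h6 ^ c +
          C (x - 1) * (X ^ a * q2 x h2 ^ b * q3 x h6 ^ c * (X + C (x - 1))) := by ring
      rw [this, map_add, L_C_mul, ← i1, ← i2]
      ring
    intro a b c habc
    refine ⟨?_, ?_, ?_⟩
    · have K1 : G x 1 (m+1) a b c * (a.factorial * b.factorial * c.factorial) =
          L S (derivative (X ^ a) * q2 x h2 ^ b * q3 x h6 ^ c) := by
        cases a with
        | zero => simp [G1_zero]
        | succ a =>
          have := H1 a b c habc
          rw [Nat.factorial_succ, derivative_X_pow]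
          push_cast
          rw [mul_assoc (C ((a : S) + 1)), mul_assoc (C ((a : S) + 1)), L_C_mul, ← this]
          ring
      have K2 : G x 2 (m+1) a b c * (a.factorial * b.factorial * c.factorial) =
          L S (X ^ a * derivative (q2 x h2 ^ b) * q3 x h6 ^ c) := by
        cases b with
        | zero => simp [G2_zero]
        | succ b =>
          have := H2 a b c habc
          rw [Nat.factorial_succ, derivative_pow, q2_der x h2 h, Nat.add_sub_cancel]
          push_cast
          have e : X ^ a * (C ((b : S) + 1) * q2 x h2 ^ b * (X + C (x - 1))) * q3 x h6 ^ c =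
            C ((b : S) + 1) * (X ^ a * q2 x h2 ^ b * q3 x h6 ^ c * (X + C (x - 1))) := by ring
          rw [e, L_C_mul, ← this]
          ring
      have K3 : G x 3 (m+1) a b c * (a.factorial * b.factorial * c.factorial) =
          L S (X ^ a * q2 x h2 ^ b * derivative (q3 x h6 ^ c)) := by
        cases c with
        | zero => simp [G3_zero]
        | succ c =>
          have := H3 a b c habc
          rw [Nat.factorial_succ, derivative_pow, q3_der x h2 h6 h h', Nat.add_sub_cancel]
          push_cast
          have e : X ^ a * q2 x h2 ^ b * (C ((c : S) + 1) * q3 x h6 ^ c *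
              (q2 x h2 + C (x - 1) * (X + C (x - 1)))) =
            C ((c : S) + 1) * (X ^ a * q2 x h2 ^ b * q3 x h6 ^ c *
              (q2 x h2 + C (x - 1) * (X + C (x - 1)))) := by ring
          rw [e, L_C_mul, ← this]
          ring
      have hd := L_derivative (X ^ a * q2 x h2 ^ b * q3 x h6 ^ c)
      have h0 : (X ^ a * q2 x h2 ^ b * q3 x h6 ^ c).coeff 0 = 0 := by
        have z2 : (q2 x h2).coeff 0 = 0 := by simp [q2]
        have z3 : (q3 x h6).coeff 0 = 0 := by simp [q3]
        simp only [coeff_zero_eq_eval_zero, eval_mul, eval_pow, eval_X] at z2 z3 ⊢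
        rw [z2, z3, ← pow_add, ← pow_add, zero_pow (by omega)]
      rw [h0, sub_zero] at hd
      rw [← hd, derivative_mul, derivative_mul, F_succ, add_mul, add_mul, K1, K2, K3,
        ← map_add, ← map_add]
      congr 1
      ring
    · rintro a' rfl
      exact H1 a' b c habc
    · rintro b' rfl
      exact H2 a b' c habc

end claim

lemma exp0 {T : Type*} [CommRing T] (A B E z : T) (n : ℕ) :
    ∃ D, (A + z * B + z ^ 2 * E) ^ n = A ^ n + z * D := by
  induction n with
  | zero => exact ⟨0, by simp⟩
  | succ n ih =>
    obtain ⟨D, hD⟩ := ih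
    refine ⟨A ^ n * B + z * A ^ n * E + D * (A + z * B + z ^ 2 * E), ?_⟩
    rw [pow_succ, hD]
    ring

lemma exp1 {T : Type*} [CommRing T] (A B E z : T) (n : ℕ) :
    ∃ D, (A + z * B + z ^ 2 * E) ^ (n+1) =
      A ^ (n+1) + z * ((n+1 : ℕ) * A ^ n * B) + z ^ 2 * D := by
  induction n with
  | zero => exact ⟨E, by simp⟩
  | succ n ih =>
    obtain ⟨D, hD⟩ := ih
    refine ⟨A ^ (n+1) * E + (n+1 : ℕ) * A ^ n * B * (B + z * E) +
      D * (A + z * B + z ^ 2 * E), ?_⟩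
    rw [pow_succ, hD]
    push_cast
    ring

lemma exp2 {T : Type*} [CommRing T] (A B E z : T) (n : ℕ) :
    ∃ D, (A + z * B + z ^ 2 * E) ^ (n+2) =
      A ^ (n+2) + z * ((n+2 : ℕ) * A ^ (n+1) * B) +
      z ^ 2 * ((n+2 : ℕ) * A ^ (n+1) * E + ((n+2).choose 2 : ℕ) * A ^ n * B ^ 2) + z ^ 3 * D := by
  induction n with
  | zero => exact ⟨2 * B * E + z * E ^ 2, by norm_num; ring⟩
  | succ n ih =>
    obtain ⟨D, hD⟩ := ih
    refine ⟨(n+2 : ℕ) * A ^ (n+1) * B * E + ((n+2 : ℕ) * A ^ (n+1) * E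
      + ((n+2).choose 2 : ℕ) * A ^ n * B ^ 2) * (B + z * E) + D * (A + z * B + z ^ 2 * E), ?_⟩
    have : ((n+1+2).choose 2 : ℕ) = (n + 2) + (n+2).choose 2 := by
      rw [show n + 1 + 2 = (n+2) + 1 by ring, Nat.choose_succ_succ' (n+2) 1]
      simp
    rw [show n + 1 + 2 = (n + 2) + 1 by ring, pow_succ, hD,
      show n + 2 + 1 = n + 1 + 2 by ring, this]
    push_cast
    ring

noncomputable def pA : ℚ[X] := C (1/6) * X ^ 3 - X ^ 2 + X
noncomputable def pB : ℚ[X] := X ^ 2 - 2 * X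

lemma q3_eq : q3 (X : ℚ[X]) (C (1/6)) =
    pA.map C + C X * pB.map C + (C X) ^ 2 * (X : ℚ[X]).map C := by
  simp [q3, pA, pB]
  ring

end alg

lemma isLin_iff (n : ℕ) (P : Finset (Finset ℕ)) : IsLinearDiagram (n * 3) 3 P ↔
    IsPt (n * 3) P ∧ cn 1 P = 0 ∧ cn 2 P = 0 ∧ cn 3 P = n := by
  constructor
  · rintro ⟨h1, h2, h3⟩
    have hpt : IsPt (n * 3) P := by
      refine ⟨?_, ?_, ?_⟩
      · intro b hb
        have := h1 b hb
        refine ⟨Finset.card_pos.1 (by omega), by omega, fun x hx => ?_⟩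
        exact Finset.mem_Icc.1 (h2 b hb x hx)
      · intro x hx1 hx2
        obtain ⟨b, hb, _⟩ := h3 x (Finset.mem_Icc.2 ⟨hx1, hx2⟩)
        exact ⟨b, hb⟩
      · intro b hb b' hb' x hx hx'
        exact (h3 x (h2 b hb x hx)).unique ⟨hb, hx⟩ ⟨hb', hx'⟩
    have hU : P.biUnion id = Finset.Icc 1 (n * 3) := by
      ext x
      simp only [Finset.mem_biUnion, id]
      constructor
      · rintro ⟨b, hb, hx⟩
        exact h2 b hb x hx
      · intro hx
        rw [Finset.mem_Icc] at hx
        exact hpt.2.1 x hx.1 hx.2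
    have hc : (P.biUnion id).card = ∑ b ∈ P, (id b).card := by
      apply Finset.card_biUnion
      intro b hb b' hb' hne
      change Disjoint b b'
      rw [Finset.disjoint_left]
      intro x hx hx'
      exact hne (hpt.2.2 b hb b' hb' x hx hx')
    have hs : ∑ b ∈ P, (id b).card = P.card * 3 := Finset.sum_const_nat (fun b hb => h1 b hb)
    rw [hU, hs, Nat.card_Icc] at hc
    refine ⟨hpt, ?_, ?_, ?_⟩
    · rw [cn, Finset.card_eq_zero, Finset.filter_eq_empty_iff]
      intro b hb
      rw [h1 b hb]
      omega
    · rw [cn, Finset.card_eq_zero, Finset.filter_eq_empty_iff]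
      intro b hb
      rw [h1 b hb]
      omega
    · rw [cn, Finset.filter_true_of_mem h1]
      omega
  · rintro ⟨hpt, h1, h2, -⟩
    rw [cn, Finset.card_eq_zero, Finset.filter_eq_empty_iff] at h1 h2
    refine ⟨?_, ?_, ?_⟩
    · intro b hb
      have e1 := h1 hb
      have e2 := h2 hb
      have e3 := (hpt.1 b hb).2.1
      have e4 := Finset.card_pos.2 (hpt.1 b hb).1
      omega
    · intro b hb x hx
      exact Finset.mem_Icc.2 ((hpt.1 b hb).2.2 x hx)
    · intro x hx
      rw [Finset.mem_Icc] at hx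
      obtain ⟨b, hb, hxb⟩ := hpt.2.1 x hx.1 hx.2
      exact ⟨b, ⟨hb, hxb⟩, fun c hc => hpt.2.2 c hc.1 b hb x hc.2 hxb⟩

section fin
open Polynomial

lemma numA_eq (n k : ℕ) : (numA 3 n k : ℚ) = (F (X : ℚ[X]) (n * 3) 0 0 n).coeff k := by
  have hset : {P : Finset (Finset ℕ) | IsLinearDiagram (n * 3) 3 P ∧ linLoops (n * 3) P = k} =
      ((DD (n * 3)).filter (fun P => (cn 1 P = 0 ∧ cn 2 P = 0 ∧ cn 3 P = n) ∧
        k = linLoops (n * 3) P) : Finset (Finset (Finset ℕ))) := by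
    ext P
    simp only [Set.mem_ofPred_eq, Finset.coe_filter, mem_DD, isLin_iff]
    constructor
    · rintro ⟨⟨h1, h2⟩, h3⟩
      exact ⟨h1, h2, h3.symm⟩
    · rintro ⟨h1, h2, h3⟩
      exact ⟨⟨h1, h2⟩, h3.symm⟩
  unfold numA F
  rw [hset, Set.ncard_coe_finset, Polynomial.finsetSum_coeff, Finset.card_filter]
  push_cast
  apply Finset.sum_congr rfl
  intro P _
  by_cases h : cn 1 P = 0 ∧ cn 2 P = 0 ∧ cn 3 P = n
  · rw [if_pos h, one_mul, coeff_X_pow]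
    simp [h]
  · rw [if_neg h, zero_mul, coeff_zero, if_neg (fun h' => h h'.1)]

lemma numA_eq' (n k : ℕ) : (numA 3 n k : ℚ) * n.factorial =
    (L ℚ[X] ((pA.map C + C X * pB.map C + (C X) ^ 2 * (X : ℚ[X]).map C) ^ n)).coeff k := by
  have h2 : (2 : ℚ[X]) * C (1/2) = 1 := by
    rw [show (2 : ℚ[X]) = C 2 from rfl, ← C_mul]; norm_num
  have h6 : (6 : ℚ[X]) * C (1/6) = 1 := by
    rw [show (6 : ℚ[X]) = C 6 from rfl, ← C_mul]; norm_num
  have := (claim (X : ℚ[X]) (C (1/2)) (C (1/6)) h2 h6 (n * 3) 0 0 n (by omega)).1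
  rw [← q3_eq, numA_eq]
  simp only [pow_zero, one_mul, Nat.factorial_zero, Nat.cast_one] at this
  rw [← this, ← C_eq_natCast, coeff_mul_C]

lemma a0 (n : ℕ) : (numA 3 n 0 : ℚ) * n.factorial = L ℚ (pA ^ n) := by
  obtain ⟨D, hD⟩ := exp0 (pA.map C) (pB.map C) ((X : ℚ[X]).map C) (C X) n
  rw [numA_eq', hD, map_add, L_C_mul, ← Polynomial.map_pow, L_map]
  simp

lemma a1 (n : ℕ) : (numA 3 (n+1) 1 : ℚ) * (n+1).factorial = (n+1 : ℕ) * L ℚ (pA ^ n * pB) := by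
  obtain ⟨D, hD⟩ := exp1 (pA.map C) (pB.map C) ((X : ℚ[X]).map C) (C X) n
  have e : pA.map C ^ (n+1) + C X * (((n+1 : ℕ) : ℚ[X][X]) * pA.map C ^ n * pB.map C) +
      (C X) ^ 2 * D = (pA ^ (n+1)).map C + C X * (C (C ((n+1 : ℕ) : ℚ)) * (pA ^ n * pB).map C) +
      C (X ^ 2) * D := by
    simp [mul_assoc]
  rw [numA_eq', hD, e]
  simp only [map_add, L_C_mul, L_map]
  simp [coeff_X_pow_mul', coeff_C]

lemma a2 (n : ℕ) : (numA 3 (n+2) 2 : ℚ) * (n+2).factorial =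
    (n+2 : ℕ) * L ℚ (pA ^ (n+1) * X) + ((n+2).choose 2 : ℕ) * L ℚ (pA ^ n * pB ^ 2) := by
  obtain ⟨D, hD⟩ := exp2 (pA.map C) (pB.map C) ((X : ℚ[X]).map C) (C X) n
  have e : pA.map C ^ (n+2) + C X * (((n+2 : ℕ) : ℚ[X][X]) * pA.map C ^ (n+1) * pB.map C) +
      (C X) ^ 2 * (((n+2 : ℕ) : ℚ[X][X]) * pA.map C ^ (n+1) * (X : ℚ[X]).map C +
        (((n+2).choose 2 : ℕ) : ℚ[X][X]) * pA.map C ^ n * pB.map C ^ 2) +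
      (C X) ^ 3 * D = (pA ^ (n+2)).map C +
      C X * (C (C ((n+2 : ℕ) : ℚ)) * (pA ^ (n+1) * pB).map C) +
      C (X ^ 2) * (C (C ((n+2 : ℕ) : ℚ)) * (pA ^ (n+1) * X).map C +
        C (C (((n+2).choose 2 : ℕ) : ℚ)) * (pA ^ n * pB ^ 2).map C) +
      C (X ^ 3) * D := by
    simp only [Polynomial.map_mul, Polynomial.map_pow, C_eq_natCast, C_pow, map_natCast]
    ring
  rw [numA_eq', hD, e]
  simp only [map_add, L_C_mul, L_map, coeff_add, coeff_X_pow_mul']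
  simp [coeff_X_mul, coeff_C, -map_natCast]

lemma ident (m : ℕ) :
    (m+2 : ℚ) * L ℚ (pA ^ (m+1) * X) + ((m+2) * (m+1) / 2) * L ℚ (pA ^ m * pB ^ 2) =
    2 * L ℚ (pA ^ (m+2)) + (9 * m + 8) * (m+2) * L ℚ (pA ^ (m+1))
      + 5 * ((m+2) * (m+1)) * L ℚ (pA ^ m * pB) + 2 * ((m+2) * (m+1)) * L ℚ (pA ^ m) := by
  let r : ℚ[X] := C (2 * (m+2) : ℚ) + C (3 * m + 4 : ℚ) * X - C (m : ℚ) * X ^ 2 - C (1/3) * X ^ 3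
  have hd := L_derivative (pA ^ (m+1) * r)
  have h0 : (pA ^ (m+1) * r).coeff 0 = 0 := by
    have z : pA.eval 0 = 0 := by simp [pA]
    simp [coeff_zero_eq_eval_zero, eval_mul, eval_pow, z]
  have hpA' : derivative pA = C (1/2) * X ^ 2 - 2 * X + 1 := by
    simp only [pA, derivative_add, derivative_sub, derivative_mul, derivative_C, derivative_X_pow,
      derivative_X]
    have : (C (1/6) * C 3 : ℚ[X]) = C (1/2) := by rw [← C_mul]; norm_num
    simp only [Nat.cast_ofNat, zero_mul, zero_add, ← mul_assoc, this]
    norm_num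
    rfl
  have hr' : derivative r = C (3 * m + 4 : ℚ) - C (2 * m : ℚ) * X - X ^ 2 := by
    have : (C (1/3) * C 3 : ℚ[X]) = 1 := by rw [← C_mul]; norm_num
    simp only [r, derivative_add, derivative_sub, derivative_mul, derivative_C, derivative_X_pow,
      derivative_X]
    simp only [Nat.cast_ofNat, zero_mul, zero_add, ← mul_assoc, this, ← C_mul]
    rw [mul_comm (m : ℚ) 2]
    norm_num
  rw [h0, sub_zero, derivative_mul, derivative_pow, hpA', hr', Nat.add_sub_cancel] at hd
  have key : C (m+2 : ℚ) * (pA ^ (m+1) * X) + C ((m+2) * (m+1) / 2 : ℚ) * (pA ^ m * pB ^ 2)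
      + (C ((m+1 : ℕ) : ℚ) * pA ^ m * (C (1/2) * X ^ 2 - 2 * X + 1) * r +
        pA ^ (m+1) * (C (3 * m + 4 : ℚ) - C (2 * m : ℚ) * X - X ^ 2)) =
    C 2 * pA ^ (m+2) + C ((9 * m + 8) * (m+2) : ℚ) * pA ^ (m+1)
      + C (5 * ((m+2) * (m+1)) : ℚ) * (pA ^ m * pB) + C (2 * ((m+2) * (m+1)) : ℚ) * pA ^ m
      + pA ^ (m+1) * r := by
    apply Polynomial.funext
    intro v
    simp only [r, pA, pB, eval_add, eval_sub, eval_mul, eval_pow, eval_C, eval_X, eval_ofNat,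
      eval_one, Nat.cast_add, Nat.cast_one]
    ring
  have := congrArg (L ℚ) key
  rw [map_add _ _ (_ + _ : ℚ[X]), hd, map_add _ _ (pA ^ (m+1) * r)] at this
  have := add_right_cancel this
  simpa only [LinearMap.map_add, L_C_mul] using this

end fin
end LRT

/-- for `d = 3` and `n ≥ 2`,
`a(n,2) = 2·a(n,0) + (9n−10)·a(n−1,0) + 5·a(n−1,1) + 2·a(n−2,0)`. -/
theorem linear_rec_three_two (n : ℕ) (hn : 2 ≤ n) :
    numA 3 n 2 = 2 * numA 3 n 0 + (9 * n - 10) * numA 3 (n - 1) 0 +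
      5 * numA 3 (n - 1) 1 + 2 * numA 3 (n - 2) 0 := by
  obtain ⟨m, rfl⟩ := Nat.exists_eq_add_of_le' hn
  have h0 := LRT.a0 (m+2)
  have h1 := LRT.a0 (m+1)
  have h2 := LRT.a0 m
  have h3 := LRT.a1 m
  have h4 := LRT.a2 m
  have key := LRT.ident m
  rw [Nat.cast_choose_two] at h4
  rw [show m + 2 - 1 = m + 1 by omega, show m + 2 - 2 = m by omega,
    show 9 * (m + 2) - 10 = 9 * m + 8 by omega]
  simp only [Nat.factorial_succ] at h0 h1 h3 h4
  have hf : (m.factorial : ℚ) ≠ 0 := by exact_mod_cast m.factorial_ne_zero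
  have hm1 : (m + 1 : ℚ) ≠ 0 := by positivity
  have hm2 : (m + 2 : ℚ) ≠ 0 := by positivity
  push_cast at h0 h1 h3 h4
  have hq : (numA 3 (m+2) 2 : ℚ) = 2 * numA 3 (m+2) 0 + (9 * m + 8) * numA 3 (m+1) 0 +
      5 * numA 3 (m+1) 1 + 2 * numA 3 m 0 := by
    have hz : ((m + 2 : ℚ) * (m + 1) * m.factorial) ≠ 0 := by positivity
    apply mul_right_cancel₀ hz
    linear_combination h4 + key - 2 * h0 - (9 * m + 8) * (m + 2) * h1
      - 5 * (m + 2) * h3 - 2 * (m + 2) * (m + 1) * h2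
  exact_mod_cast hq
end

section
/- Fix integers d ≥ 2 and n ≥ 1, and set N = n·d. Let c, c′ ∈ Z/N be such that the reflections r_c : i ↦ c−i and r_{c′} : i ↦ c′−i of Z/N have the same number of fixed points. Then the number of loopless generalized chord diagrams of order (n,d) invariant under r_c equals the number of those invariant under r_{c′}. -/
theorem refl_aux_le (N d : ℕ) [NeZero N] (c c' t : ZMod N) (hc : c' = c + (t + t)) :
    Set.ncard {P : Finset (Finset (ZMod N)) |
        IsChordDiagram N d P ∧ ChordLoopless N P ∧
          ∀ b ∈ P, b.image (fun i => c - i) ∈ P} ≤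
      Set.ncard {P : Finset (Finset (ZMod N)) |
        IsChordDiagram N d P ∧ ChordLoopless N P ∧
          ∀ b ∈ P, b.image (fun i => c' - i) ∈ P} := by
  have hinj : Function.Injective (fun i : ZMod N => i + t) := add_left_injective t
  have hmem : ∀ (b : Finset (ZMod N)) (x : ZMod N),
      x ∈ b.image (fun i => i + t) ↔ x - t ∈ b := by
    intro b x
    simp only [Finset.mem_image]
    constructor
    · rintro ⟨a, ha, rfl⟩
      simpa using ha
    · intro hx
      exact ⟨x - t, hx, by ring⟩
  refine Set.ncard_le_ncard_of_injOn
    (fun P => P.image (fun b => b.image (fun i => i + t))) ?_ ?_ (Set.toFinite _)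
  · rintro P ⟨⟨h1, h2⟩, h3, h4⟩
    refine ⟨⟨?_, ?_⟩, ?_, ?_⟩
    · intro b hb
      obtain ⟨a, ha, rfl⟩ := Finset.mem_image.1 hb
      rw [Finset.card_image_of_injective _ hinj]
      exact h1 a ha
    · intro x
      obtain ⟨b, ⟨hb, hxb⟩, hu⟩ := h2 (x - t)
      refine ⟨b.image (fun i => i + t), ⟨Finset.mem_image_of_mem _ hb, (hmem b x).2 hxb⟩, ?_⟩
      rintro y ⟨hy, hxy⟩
      obtain ⟨a, ha, rfl⟩ := Finset.mem_image.1 hy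
      rw [hu a ⟨ha, (hmem a x).1 hxy⟩]
    · intro i b hb hi hi1
      obtain ⟨a, ha, rfl⟩ := Finset.mem_image.1 hb
      refine h3 (i - t) a ha ((hmem a i).1 hi) ?_
      have := (hmem a (i + 1)).1 hi1
      rwa [show i - t + 1 = i + 1 - t by ring]
    · intro b hb
      obtain ⟨a, ha, rfl⟩ := Finset.mem_image.1 hb
      refine Finset.mem_image.2 ⟨_, h4 a ha, ?_⟩
      simp only [Finset.image_image]
      congr 1
      funext i
      simp only [Function.comp, hc]
      ring
  · exact (Finset.image_injective (Finset.image_injective hinj)).injOn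

theorem refl_aux_parity (N : ℕ) [NeZero N] (c : ZMod N) :
    ∃ t : ZMod N, c = t + t ∨ c = t + t + 1 := by
  have hv : ((c.val : ℕ) : ZMod N) = c := ZMod.natCast_zmod_val c
  rcases Nat.even_or_odd' c.val with ⟨k, hk | hk⟩
  · refine ⟨k, Or.inl ?_⟩
    rw [← hv, hk]; push_cast; ring
  · refine ⟨k, Or.inr ?_⟩
    rw [← hv, hk]; push_cast; ring

theorem refl_aux_exists (N : ℕ) [NeZero N] (c c' : ZMod N)
    (h : Set.ncard {x : ZMod N | x + x = c} = Set.ncard {x : ZMod N | x + x = c'}) :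
    ∃ t : ZMod N, c' = c + (t + t) := by
  have key : ({x : ZMod N | x + x = c}).Nonempty ↔ ({x : ZMod N | x + x = c'}).Nonempty := by
    rw [← Set.ncard_pos (Set.toFinite _), ← Set.ncard_pos (Set.toFinite _), h]
  by_cases hne : ({x : ZMod N | x + x = c}).Nonempty
  · obtain ⟨y, hy⟩ := key.1 hne
    obtain ⟨x, hx⟩ := hne
    refine ⟨y - x, ?_⟩
    rw [← show x + x = c from hx, ← show y + y = c' from hy]
    ring
  · have hne' := fun hh => hne (key.2 hh)
    obtain ⟨a, ha | ha⟩ := refl_aux_parity N c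
    · exact absurd ⟨a, ha.symm⟩ hne
    obtain ⟨b, hb | hb⟩ := refl_aux_parity N c'
    · exact absurd ⟨b, hb.symm⟩ hne'
    refine ⟨b - a, ?_⟩
    rw [ha, hb]
    ring

/-- reflections of `ZMod (n·d)` with the same number of fixed points fix
the same number of loopless generalized chord diagrams. -/
theorem reflection_fixed_count_eq (d : ℕ) (hd : 2 ≤ d) (n : ℕ) (hn : 1 ≤ n)
    (c c' : ZMod (n * d))
    (h : Set.ncard {x : ZMod (n * d) | x + x = c} =
      Set.ncard {x : ZMod (n * d) | x + x = c'}) :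
    Set.ncard {P : Finset (Finset (ZMod (n * d))) |
        IsChordDiagram (n * d) d P ∧ ChordLoopless (n * d) P ∧
          ∀ b ∈ P, b.image (fun i => c - i) ∈ P} =
      Set.ncard {P : Finset (Finset (ZMod (n * d))) |
        IsChordDiagram (n * d) d P ∧ ChordLoopless (n * d) P ∧
          ∀ b ∈ P, b.image (fun i => c' - i) ∈ P} := by
  haveI : NeZero (n * d) := ⟨Nat.mul_ne_zero (by omega) (by omega)⟩
  obtain ⟨t, ht⟩ := refl_aux_exists (n * d) c c' h
  exact le_antisymm (refl_aux_le (n * d) d c c' t ht)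
    (refl_aux_le (n * d) d c' c (-t) (by rw [ht]; ring))
end

section
/- Fix an odd integer d ≥ 3 and an even integer n ≥ 2. The number of loopless generalized chord diagrams of order (n,d) that are invariant under the reflection i ↦ 1−i (mod n·d) (a reflection with no fixed points, since n·d is even) equals ã(n·d/2, 0; 2, d). -/
/-- the relabelling map -/
def rg (v : ℕ) (j : ℕ) : ZMod (2 * v) := if j ≤ v then (j : ZMod (2*v)) else 1 + (v : ZMod (2*v)) - j

theorem two_v (v : ℕ) : (2 : ZMod (2*v)) * v = 0 := by
  have := ZMod.natCast_self (2*v)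
  push_cast at this
  exact this

theorem rg_shift (v j : ℕ) (hj : j ∈ Finset.Icc 1 (2*v)) :
    rg v (shiftMod (2*v) v j) = 1 - rg v j := by
  have h2 := two_v v
  rw [Finset.mem_Icc] at hj
  unfold rg shiftMod
  by_cases h : j ≤ v
  · have h1 : j + v ≤ 2*v := by omega
    have h3 : ¬ (j + v ≤ v) := by omega
    simp only [h, h1, h3, if_true, if_false]
    push_cast; ring
  · have h1 : ¬ (j + v ≤ 2*v) := by omega
    have h3 : (j + v - 2*v ≤ v) := by omega
    simp only [h, h1, h3, if_true, if_false]
    have : j + v - 2 * v = j - v := by omega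
    rw [this, Nat.cast_sub (by omega)]
    ring

theorem shift_mem (v j : ℕ) (hj : j ∈ Finset.Icc 1 (2*v)) :
    shiftMod (2*v) v j ∈ Finset.Icc 1 (2*v) := by
  rw [Finset.mem_Icc] at *
  unfold shiftMod
  split_ifs <;> omega

theorem rg_surj (v : ℕ) (hv : 1 ≤ v) (i : ZMod (2*v)) :
    ∃ x ∈ Finset.Icc 1 (2*v), rg v x = i := by
  have h2 := two_v v
  have : NeZero (2*v) := ⟨by omega⟩
  have hlt := ZMod.val_lt i
  have hi : ((i.val : ℕ) : ZMod (2*v)) = i := ZMod.natCast_zmod_val i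
  by_cases h0 : i.val = 0
  · refine ⟨v+1, by rw [Finset.mem_Icc]; omega, ?_⟩
    rw [← hi, h0]
    simp [rg, add_comm]
  · by_cases h : i.val ≤ v
    · exact ⟨i.val, by rw [Finset.mem_Icc]; omega, by simp [rg, h]⟩
    · refine ⟨3*v+1-i.val, by rw [Finset.mem_Icc]; omega, ?_⟩
      have : ¬ (3*v+1-i.val ≤ v) := by omega
      rw [rg, if_neg this, Nat.cast_sub (by omega), hi]
      push_cast
      linear_combination -h2

theorem rg_inj (v : ℕ) (hv : 1 ≤ v) : Set.InjOn (rg v) (Finset.Icc 1 (2*v) : Finset ℕ) := by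
  have : NeZero (2*v) := ⟨by omega⟩
  have : Set.SurjOn (rg v) (Finset.Icc 1 (2*v) : Finset ℕ) ((Finset.univ : Finset (ZMod (2*v))) : Set _) := by
    intro i _
    obtain ⟨x, hx, h⟩ := rg_surj v hv i
    exact ⟨x, hx, h⟩
  exact Finset.injOn_of_surjOn_of_card_le _ (fun _ _ => by simp) this (by simp [ZMod.card])

theorem rg_even (v d : ℕ) (hd : Odd d) (b : Finset (ZMod (2*v))) (hb : b.card = d)
    (h : b.image (fun i => 1 - i) = b) : False := by
  have : ∑ x ∈ b, (1 : ZMod 2) = 0 := by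
    refine Finset.sum_involution (fun x _ => 1 - x) (fun _ _ => by decide) ?_ ?_ (fun _ _ => by ring)
    · intro a _ _ h
      have h3 := congrArg (ZMod.castHom (Dvd.intro v rfl : 2 ∣ 2*v) (ZMod 2)) h
      rw [map_sub, map_one] at h3
      generalize (ZMod.castHom (Dvd.intro v rfl : 2 ∣ 2*v) (ZMod 2)) a = y at h3
      revert y; decide
    · intro a ha
      rw [← h]
      exact Finset.mem_image_of_mem _ ha
  rw [Finset.sum_const, hb, nsmul_eq_mul, mul_one] at this
  rw [ZMod.natCast_eq_zero_iff] at this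
  obtain ⟨k, hk⟩ := hd
  omega

theorem rg_loop_lo (v x : ℕ) (h : x + 1 ≤ v) : rg v (x+1) = rg v x + 1 := by
  have h' : x ≤ v := by omega
  simp [rg, h, h']

theorem rg_loop_hi (v x : ℕ) (h : v + 1 ≤ x) : rg v x = rg v (x+1) + 1 := by
  have h1 : ¬ (x ≤ v) := by omega
  have h2 : ¬ (x + 1 ≤ v) := by omega
  simp only [rg, h1, h2, if_false]; push_cast; ring

theorem rg_refl_mid (v : ℕ) : rg v v + 1 = 1 - rg v v := by
  have h2 := two_v v
  simp only [rg, le_refl, if_true]; linear_combination h2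

theorem rg_zero (v : ℕ) : rg v (v+1) = 0 := by
  simp [rg, add_comm]

theorem sector_zero (v s : ℕ) (Q : Finset (Finset ℕ)) : sectorLoops v Q s = 0 ↔
    ∀ i, s * v + 1 ≤ i → i + 1 ≤ (s + 1) * v → ∀ b ∈ Q, i ∈ b → i + 1 ∈ b → False := by
  unfold sectorLoops
  rw [Set.ncard_eq_zero ((Set.finite_Icc 0 ((s+1)*v)).subset
    (fun i hi => ⟨by omega, by have := hi.2.1; omega⟩)), Set.eq_empty_iff_forall_notMem]
  constructor
  · intro h i h1 h2 b hb h3 h4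
    exact h i ⟨h1, h2, b, hb, h3, h4⟩
  · rintro h i ⟨h1, h2, b, hb, h3, h4⟩
    exact h i h1 h2 b hb h3 h4

theorem main_v (d v : ℕ) (hd : Odd d) (hv : 1 ≤ v) :
    Set.ncard {P : Finset (Finset (ZMod (2*v))) |
        IsChordDiagram (2*v) d P ∧ ChordLoopless (2*v) P ∧
          ∀ b ∈ P, b.image (fun i => 1 - i) ∈ P} =
      numAtil d 2 v 0 := by
  unfold numAtil
  symm
  choose f hfm hf using rg_surj v hv
  have hinj := rg_inj v hv
  have hfg : ∀ x ∈ Finset.Icc 1 (2*v), f (rg v x) = x := fun x hx =>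
    hinj (hfm _) hx (hf _)
  have hfinj : Function.Injective f := fun a b h => by rw [← hf a, ← hf b, h]
  have hgf' : ∀ b : Finset (ZMod (2*v)), (b.image f).image (rg v) = b := by
    intro b
    rw [Finset.image_image]
    conv_rhs => rw [← Finset.image_id (s := b)]
    exact Finset.image_congr (fun x _ => hf x)
  have hfg' : ∀ b : Finset ℕ, (∀ x ∈ b, x ∈ Finset.Icc 1 (2*v)) → (b.image (rg v)).image f = b := by
    intro b hb
    rw [Finset.image_image]
    conv_rhs => rw [← Finset.image_id (s := b)]
    exact Finset.image_congr (fun x hx => hfg x (hb x hx))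
  -- membership transfer
  have hmg : ∀ b : Finset ℕ, (∀ x ∈ b, x ∈ Finset.Icc 1 (2*v)) → ∀ i,
      i ∈ b.image (rg v) ↔ f i ∈ b := by
    intro b hb i
    rw [Finset.mem_image]
    constructor
    · rintro ⟨x, hx, rfl⟩
      rwa [hfg x (hb x hx)]
    · intro h; exact ⟨_, h, hf i⟩
  have hmf : ∀ b : Finset (ZMod (2*v)), ∀ x ∈ Finset.Icc 1 (2*v),
      (x ∈ b.image f ↔ rg v x ∈ b) := by
    intro b x hx
    rw [Finset.mem_image]
    constructor
    · rintro ⟨i, hi, rfl⟩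
      rwa [hf]
    · intro h; exact ⟨_, h, hfg x hx⟩
  have hfsh : ∀ i, f (1 - i) = shiftMod (2*v) v (f i) := by
    intro i
    apply hinj (hfm _) (shift_mem v _ (hfm _))
    rw [rg_shift v _ (hfm _), hf, hf]
  have himg : ∀ b : Finset ℕ, (∀ x ∈ b, x ∈ Finset.Icc 1 (2*v)) →
      (b.image (rg v)).image (fun i => 1 - i) = (b.image (shiftMod (2*v) v)).image (rg v) := by
    intro b hb
    rw [Finset.image_image, Finset.image_image]
    exact Finset.image_congr (fun x hx => (rg_shift v x (hb x hx)).symm)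
  have himf : ∀ b : Finset (ZMod (2*v)),
      (b.image f).image (shiftMod (2*v) v) = (b.image (fun i => 1 - i)).image f := by
    intro b
    rw [Finset.image_image, Finset.image_image]
    exact Finset.image_congr (fun x hx => (hfsh x).symm)
  refine Set.ncard_congr (fun Q _ => Q.image (fun b => b.image (rg v))) ?_ ?_ ?_
  · rintro Q ⟨⟨⟨hc, hI, hp⟩, hs⟩, hl⟩
    have hcd : ∀ b ∈ Q.image (fun b => b.image (rg v)), b.card = d := by
      intro b hb
      rw [Finset.mem_image] at hb
      obtain ⟨b, hb, rfl⟩ := hb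
      rw [Finset.card_image_of_injOn (hinj.mono (fun x hx => hI b hb x hx)), hc b hb]
    have hpart : ∀ x : ZMod (2*v), ∃! b : Finset (ZMod (2*v)),
        b ∈ Q.image (fun b => b.image (rg v)) ∧ x ∈ b := by
      intro i
      obtain ⟨b, ⟨hb, hx⟩, hu⟩ := hp (f i) (hfm i)
      refine ⟨b.image (rg v), ⟨Finset.mem_image_of_mem _ hb, (hmg b (hI b hb) i).2 hx⟩, ?_⟩
      rintro c ⟨hc, hic⟩
      rw [Finset.mem_image] at hc
      obtain ⟨c, hc, rfl⟩ := hc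
      rw [hu c ⟨hc, (hmg c (hI c hc) i).1 hic⟩]
    have hrefl : ∀ b ∈ Q.image (fun b => b.image (rg v)), 
        b.image (fun i => 1 - i) ∈ Q.image (fun b => b.image (rg v)) := by
      intro b hb
      rw [Finset.mem_image] at hb
      obtain ⟨b, hb, rfl⟩ := hb
      rw [himg b (hI b hb)]
      exact Finset.mem_image_of_mem (fun b => b.image (rg v)) (hs b hb)
    refine ⟨⟨hcd, hpart⟩, ?_, hrefl⟩
    intro i b' hb' hi hi1
    have key : i + 1 = 1 - i → False := by
      intro h
      apply rg_even v d hd b' (hcd b' hb')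
      apply (hpart (i+1)).unique ⟨hrefl b' hb', ?_⟩ ⟨hb', hi1⟩
      rw [h]
      exact Finset.mem_image_of_mem (fun i => 1 - i) hi
    obtain ⟨b, hb, rfl⟩ := Finset.mem_image.1 hb'
    rw [hmg b (hI b hb)] at hi hi1
    obtain ⟨x, hx, rfl⟩ := rg_surj v hv i
    rw [hfg x hx] at hi
    have hx' := Finset.mem_Icc.1 hx
    rcases lt_trichotomy x v with h | h | h
    · rw [← rg_loop_lo v x h, hfg (x+1) (by rw [Finset.mem_Icc]; omega)] at hi1
      exact (sector_zero v 0 Q).1 (hl 0 (by omega)) x (by omega) (by omega) b hb hi hi1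
    · subst h
      exact key (rg_refl_mid x)
    · by_cases h' : x = v + 1
      · subst h'
        apply key
        rw [rg_zero]; ring
      · obtain ⟨y, rfl⟩ : ∃ y, x = y + 1 := ⟨x - 1, by omega⟩
        rw [← rg_loop_hi v y (by omega), hfg y (by rw [Finset.mem_Icc]; omega)] at hi1
        exact (sector_zero v 1 Q).1 (hl 1 (by omega)) y (by omega) (by omega) b hb hi1 hi
  · rintro Q Q' ⟨⟨⟨-, hI, -⟩, -⟩, -⟩ ⟨⟨⟨-, hI', -⟩, -⟩, -⟩ h
    have aux : ∀ R : Finset (Finset ℕ), (∀ b ∈ R, ∀ x ∈ b, x ∈ Finset.Icc 1 (2*v)) →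
        (R.image (fun b => b.image (rg v))).image (fun b => b.image f) = R := by
      intro R hR
      rw [Finset.image_image]
      conv_rhs => rw [← Finset.image_id (s := R)]
      exact Finset.image_congr (fun b hb => hfg' b (hR b hb))
    rw [← aux Q hI, ← aux Q' hI']
    exact congrArg _ h
  · rintro P ⟨⟨hc, hp⟩, hl, hr⟩
    have hQP : ((P.image (fun b => b.image f)).image (fun b => b.image (rg v))) = P := by
      rw [Finset.image_image]
      conv_rhs => rw [← Finset.image_id (s := P)]
      exact Finset.image_congr (fun b hb => hgf' b)
    refine ⟨P.image (fun b => b.image f), ⟨⟨⟨?_, ?_, ?_⟩, ?_⟩, ?_⟩, hQP⟩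
    · intro b hb
      rw [Finset.mem_image] at hb
      obtain ⟨b, hb, rfl⟩ := hb
      rw [Finset.card_image_of_injective _ hfinj, hc b hb]
    · intro b hb x hx
      rw [Finset.mem_image] at hb
      obtain ⟨b, hb, rfl⟩ := hb
      obtain ⟨i, hi, rfl⟩ := Finset.mem_image.1 hx
      exact hfm i
    · intro x hx
      obtain ⟨b, ⟨hb, hxb⟩, hu⟩ := hp (rg v x)
      refine ⟨b.image f, ⟨Finset.mem_image_of_mem _ hb, (hmf b x hx).2 hxb⟩, ?_⟩
      rintro c ⟨hc, hic⟩
      rw [Finset.mem_image] at hc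
      obtain ⟨c, hc, rfl⟩ := hc
      rw [hu c ⟨hc, (hmf c x hx).1 hic⟩]
    · intro b hb
      rw [Finset.mem_image] at hb
      obtain ⟨b, hb, rfl⟩ := hb
      rw [himf b]
      exact Finset.mem_image_of_mem (fun b => b.image f) (hr b hb)
    · intro s hs
      rw [sector_zero]
      intro x h1 h2 b hb hx hx1
      rw [Finset.mem_image] at hb
      obtain ⟨b, hb, rfl⟩ := hb
      have hs' : s = 0 ∨ s = 1 := by omega
      rcases hs' with rfl | rfl
      · rw [hmf b _ (by rw [Finset.mem_Icc]; omega)] at hx hx1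
        rw [rg_loop_lo v x (by omega)] at hx1
        exact hl _ b hb hx hx1
      · rw [hmf b _ (by rw [Finset.mem_Icc]; omega)] at hx hx1
        rw [rg_loop_hi v x (by omega)] at hx
        exact hl _ b hb hx1 hx

/-- for odd `d ≥ 3` and even `n ≥ 2`, the number of loopless generalized
chord diagrams of order `(n,d)` invariant under `i ↦ 1−i` equals `ã(n·d/2,0;2,d)`. -/
theorem reflection_no_fixed_point_odd_d (d : ℕ) (hd : 3 ≤ d) (hdo : Odd d)
    (n : ℕ) (hn : 2 ≤ n) (hne : Even n) :
    Set.ncard {P : Finset (Finset (ZMod (n * d))) |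
        IsChordDiagram (n * d) d P ∧ ChordLoopless (n * d) P ∧
          ∀ b ∈ P, b.image (fun i => 1 - i) ∈ P} =
      numAtil d 2 (n * d / 2) 0 := by
  have h : n * d = 2 * (n * d / 2) := by
    have : Even (n * d) := hne.mul_right d
    obtain ⟨k, hk⟩ := this
    omega
  have hv : 1 ≤ n * d / 2 := by
    have : 2 * 3 ≤ n * d := Nat.mul_le_mul hn hd
    omega
  generalize n * d / 2 = v at h hv ⊢
  rw [h]
  exact main_v d v hdo hv
end

section
/- Fix an odd integer d ≥ 3 and an odd integer n ≥ 3. The number of loopless generalized chord diagrams of order (n,d) that are invariant under the reflection i ↦ −i (mod n·d) (a reflection with exactly one fixed point, since n·d is odd) equals Σ_{k=0}^{(d−1)/2} C(d(n−1)/2 − 1 − k, (d−1)/2 − k) · ã(d(n−1)/2, k; 2, d). -/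
namespace Refl

def fT (T : Finset ℕ) (j : ℕ) : ℕ := j + (T.filter (· < j)).card

def phi (v N : ℕ) (T : Finset ℕ) (j : ℕ) : ZMod N :=
  if j ≤ v then (fT T j : ZMod N) else -(fT T (j - v) : ZMod N)

def ST (T : Finset ℕ) : Finset ℕ := T.image (fun t => fT T t + 1)

def BS (N : ℕ) (S : Finset ℕ) : Finset (ZMod N) :=
  insert 0 (S.image (fun s : ℕ => (s : ZMod N)) ∪ S.image (fun s : ℕ => -(s : ZMod N)))

lemma mem_BS (N : ℕ) (S : Finset ℕ) (x : ZMod N) :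
    x ∈ BS N S ↔ x = 0 ∨ (∃ s ∈ S, (s : ZMod N) = x) ∨ ∃ s ∈ S, -(s : ZMod N) = x := by
  simp [BS]

lemma fT_succ (T : Finset ℕ) (j : ℕ) : fT T (j+1) = fT T j + 1 + (if j ∈ T then 1 else 0) := by
  unfold fT
  have : T.filter (· < j+1) = T.filter (· < j) ∪ T.filter (· = j) := by
    ext x; simp only [Finset.mem_filter, Finset.mem_union]; grind
  rw [this, Finset.card_union_of_disjoint]
  · rw [Finset.filter_eq']; split_ifs <;> simp <;> omega
  · rw [Finset.disjoint_filter]; intro x _ h; omega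

lemma fT_strictMono (T : Finset ℕ) : StrictMono (fT T) := by
  apply strictMono_nat_of_lt_succ
  intro j; rw [fT_succ]; omega

lemma fT_ge (T : Finset ℕ) (j : ℕ) : j ≤ fT T j := by unfold fT; omega

/-- data for T -/
structure TData (h v : ℕ) (T : Finset ℕ) : Prop where
  hv : 1 ≤ v
  sub : ∀ t ∈ T, 1 ≤ t ∧ t < v
  card : T.card = h

variable {h v N : ℕ} {T : Finset ℕ}

lemma fT_v (H : TData h v T) : fT T v = v + h := by
  unfold fT
  rw [Finset.filter_true_of_mem (fun t ht => (H.sub t ht).2), H.card]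

lemma fT_le (H : TData h v T) {j : ℕ} (hj : j ≤ v) : fT T j ≤ v + h := by
  rw [← fT_v H]; exact (fT_strictMono T).monotone hj

lemma fT_eq_v (H : TData h v T) {j : ℕ} (hj : fT T j = v + h) : j = v := by
  rw [← fT_v H] at hj; exact (fT_strictMono T).injective hj

lemma fT_adj {i j : ℕ} (hij : fT T j = fT T i + 1) : j = i + 1 ∧ i ∉ T := by
  have h1 := fT_succ T i
  have hj : i < j := (fT_strictMono T).lt_iff_lt.1 (by omega)
  have h2 := (fT_strictMono T).monotone (show i + 1 ≤ j from hj)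
  split_ifs at h1 with hi
  · omega
  · exact ⟨(fT_strictMono T).injective (by omega), hi⟩

lemma fT_ne_ST {j : ℕ} : fT T j ∉ ST T := by
  simp only [ST, Finset.mem_image, not_exists, not_and]
  intro t ht he
  exact (fT_adj he.symm).2 ht

lemma ST_bounds (H : TData h v T) {s : ℕ} (hs : s ∈ ST T) : 2 ≤ s ∧ s + 1 ≤ v + h := by
  simp only [ST, Finset.mem_image] at hs
  obtain ⟨t, ht, rfl⟩ := hs
  have h1 := fT_succ T t
  have h2 := fT_le H (show t + 1 ≤ v from (H.sub t ht).2)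
  have := fT_ge T t
  have := (H.sub t ht).1
  simp only [ht, if_true] at h1
  omega

lemma ST_nonadj {s : ℕ} (hs : s ∈ ST T) (hs' : s + 1 ∈ ST T) : False := by
  simp only [ST, Finset.mem_image] at hs hs'
  obtain ⟨t, ht, rfl⟩ := hs
  obtain ⟨t', ht', he⟩ := hs'
  exact (fT_adj (show fT T t' = fT T t + 1 by omega)).2 ht

lemma ST_card : (ST T).card = T.card :=
  Finset.card_image_of_injective _ (fun a b hab => (fT_strictMono T).injective (by simpa using hab))

lemma fT_cover (H : TData h v T) {a : ℕ} (h1 : 1 ≤ a) (h2 : a ≤ v + h) :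
    a ∈ ST T ∨ ∃ j, 1 ≤ j ∧ j ≤ v ∧ fT T j = a := by
  have key : (ST T ∪ (Finset.Icc 1 v).image (fT T)) = Finset.Icc 1 (v + h) := by
    apply Finset.eq_of_subset_of_card_le
    · intro x hx
      rw [Finset.mem_union] at hx
      rw [Finset.mem_Icc]
      rcases hx with hx | hx
      · have := ST_bounds H hx; omega
      · simp only [Finset.mem_image, Finset.mem_Icc] at hx
        obtain ⟨j, hj, rfl⟩ := hx
        have := fT_le H hj.2
        have := fT_ge T j
        omega
    · rw [Finset.card_union_of_disjoint, ST_card, Finset.card_image_of_injective _ (fT_strictMono T).injective, H.card]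
      · simp; omega
      · rw [Finset.disjoint_left]
        intro x hx hx'
        simp only [Finset.mem_image] at hx'
        obtain ⟨j, _, rfl⟩ := hx'
        exact fT_ne_ST hx
  have : a ∈ Finset.Icc 1 (v + h) := by simp; omega
  rw [← key] at this
  simpa [and_assoc] using this

-- ZMod arithmetic
lemma cast_inj (N : ℕ) {a b : ℕ} (ha : a < N) (hb : b < N) (hab : (a : ZMod N) = b) : a = b := by
  rw [ZMod.natCast_eq_natCast_iff'] at hab
  rwa [Nat.mod_eq_of_lt ha, Nat.mod_eq_of_lt hb] at hab

lemma cast_neg {N : ℕ} {a b : ℕ} (hab : (a : ZMod N) = -b) : N ∣ a + b := by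
  rw [← ZMod.natCast_eq_zero_iff]; push_cast; rw [hab]; ring

lemma cast_cover {M : ℕ} (hN : N = 2 * M + 1) (x : ZMod N) :
    x = 0 ∨ ∃ a, 1 ≤ a ∧ a ≤ M ∧ ((a : ZMod N) = x ∨ -(a : ZMod N) = x) := by
  have : NeZero N := ⟨by omega⟩
  have hx := x.val_lt
  have hc := ZMod.natCast_zmod_val x
  by_cases h0 : x.val = 0
  · left; rw [← hc, h0]; simp
  right
  by_cases hM : x.val ≤ M
  · exact ⟨x.val, by omega, hM, Or.inl hc⟩
  · refine ⟨N - x.val, by omega, by omega, Or.inr ?_⟩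
    rw [Nat.cast_sub hx.le, hc]; simp

lemma phi_inj (H : TData h v T) (hN : N = 2 * (v + h) + 1) {i j : ℕ} (hi : 1 ≤ i ∧ i ≤ 2 * v)
    (hj : 1 ≤ j ∧ j ≤ 2 * v) (hij : phi v N T i = phi v N T j) : i = j := by
  unfold phi at hij
  have inj := (fT_strictMono T).injective
  split_ifs at hij with h1 h2 h2
  · have := fT_le H h1; have := fT_le H h2
    exact inj (cast_inj N (by omega) (by omega) hij)
  · have := fT_le H h1; have := fT_le H (show j - v ≤ v by omega)
    have := fT_ge T i
    have := Nat.le_of_dvd (by omega) (cast_neg hij)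
    omega
  · have := fT_le H h2; have := fT_le H (show i - v ≤ v by omega)
    have := fT_ge T j
    have := Nat.le_of_dvd (by omega) (cast_neg hij.symm)
    omega
  · have := fT_le H (show j - v ≤ v by omega); have := fT_le H (show i - v ≤ v by omega)
    have := inj (cast_inj N (by omega) (by omega) (neg_injective hij))
    omega

lemma phi_shift (H : TData h v T) {i : ℕ} (hi : 1 ≤ i ∧ i ≤ 2 * v) :
    phi v N T (shiftMod (2 * v) v i) = - phi v N T i := by
  unfold phi shiftMod
  by_cases h1 : i ≤ v
  · rw [if_pos (show i + v ≤ 2 * v by omega), if_neg (by omega), if_pos h1]; simp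
  · rw [if_neg (show ¬ (i + v ≤ 2 * v) by omega), if_pos (by omega), if_neg h1,
      show i + v - 2 * v = i - v by omega]; simp

lemma phi_not_BS (H : TData h v T) (hN : N = 2 * (v + h) + 1) {i : ℕ} (hi : 1 ≤ i ∧ i ≤ 2 * v) :
    phi v N T i ∉ BS N (ST T) := by
  rw [mem_BS]
  have aux : ∀ j, 1 ≤ j → j ≤ v → ¬ ((fT T j : ZMod N) = 0 ∨ (∃ s ∈ ST T, (s : ZMod N) = fT T j) ∨ ∃ s ∈ ST T, -(s : ZMod N) = fT T j) := by
    intro j h1 h2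
    have := fT_le H h2
    have := fT_ge T j
    rintro (h0 | ⟨s, hs, he⟩ | ⟨s, hs, he⟩)
    · rw [ZMod.natCast_eq_zero_iff] at h0
      have := Nat.le_of_dvd (by omega) h0
      omega
    · have := ST_bounds H hs
      have := cast_inj N (by omega) (by omega) he
      subst this
      exact fT_ne_ST hs
    · have := ST_bounds H hs
      have := Nat.le_of_dvd (by omega) (cast_neg he.symm)
      omega
  unfold phi
  split_ifs with h1
  · exact aux i hi.1 h1
  · intro hh
    apply aux (i - v) (by omega) (by omega)
    rcases hh with h0 | ⟨s, hs, he⟩ | ⟨s, hs, he⟩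
    · left; simpa using h0
    · right; right; exact ⟨s, hs, by rw [he]; simp⟩
    · right; left; exact ⟨s, hs, by simpa using he⟩

lemma phi_cover (H : TData h v T) (hN : N = 2 * (v + h) + 1) (x : ZMod N) (hx : x ∉ BS N (ST T)) :
    ∃ i, (1 ≤ i ∧ i ≤ 2 * v) ∧ phi v N T i = x := by
  rw [mem_BS] at hx
  push Not at hx
  obtain ⟨h0, h1, h2⟩ := hx
  obtain h | ⟨a, ha, ha', h⟩ := cast_cover hN x
  · exact absurd h h0
  obtain h' | ⟨j, hj, hj', rfl⟩ := fT_cover H ha ha'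
  · rcases h with h | h
    · exact absurd h (h1 _ h')
    · exact absurd h (h2 _ h')
  · rcases h with h | h
    · exact ⟨j, by omega, by simp [phi, hj', h]⟩
    · exact ⟨j + v, by omega, by simp [phi, show ¬ (j + v ≤ v) by omega, h]⟩

lemma BS_neg {S : Finset ℕ} {x : ZMod N} (hx : x ∈ BS N S) : -x ∈ BS N S := by
  rw [mem_BS] at *
  rcases hx with h0 | ⟨s, hs, he⟩ | ⟨s, hs, he⟩
  · left; simpa using h0
  · right; right; exact ⟨s, hs, by rw [he]⟩
  · right; left; exact ⟨s, hs, by rw [← he]; simp⟩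

lemma BS_card {S : Finset ℕ} {M : ℕ} (hN : N = 2 * M + 1) (hS : ∀ s ∈ S, 1 ≤ s ∧ s ≤ M) :
    (BS N S).card = 2 * S.card + 1 := by
  unfold BS
  rw [Finset.card_insert_of_notMem, Finset.card_union_of_disjoint, Finset.card_image_of_injOn,
    Finset.card_image_of_injOn]
  · ring
  · intro a ha b hb hab
    have := hS a ha; have := hS b hb
    exact cast_inj N (by omega) (by omega) (neg_injective hab)
  · intro a ha b hb hab
    have := hS a ha; have := hS b hb
    exact cast_inj N (by omega) (by omega) hab
  · rw [Finset.disjoint_left]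
    intro x hx hx'
    simp only [Finset.mem_image] at hx hx'
    obtain ⟨a, ha, rfl⟩ := hx
    obtain ⟨b, hb, he⟩ := hx'
    have := hS a ha; have := hS b hb
    have := Nat.le_of_dvd (by omega) (cast_neg he.symm)
    omega
  · simp only [Finset.mem_union, Finset.mem_image, not_or, not_exists, not_and, neg_eq_zero]
    have : ∀ s ∈ S, ¬ (s : ZMod N) = 0 := by
      intro s hs h0
      have := hS s hs
      rw [ZMod.natCast_eq_zero_iff] at h0
      have := Nat.le_of_dvd (by omega) h0
      omega
    exact ⟨this, this⟩

lemma BS_nonadj (H : TData h v T) (hN : N = 2 * (v + h) + 1) {x : ZMod N} (hx : x ∈ BS N (ST T))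
    (hx' : x + 1 ∈ BS N (ST T)) : False := by
  have hv := H.hv
  have no1 : ∀ s ∈ ST T, ¬ (s : ZMod N) = 1 := by
    intro s hs he
    have := ST_bounds H hs
    have := cast_inj N (a := s) (b := 1) (by omega) (by omega) (by simpa using he)
    omega
  have nom1 : ∀ s ∈ ST T, ¬ (s : ZMod N) = -1 := by
    intro s hs he
    have := ST_bounds H hs
    have := Nat.le_of_dvd (by omega) (cast_neg (a := s) (b := 1) (by simpa using he))
    omega
  have sum : ∀ s ∈ ST T, ∀ t ∈ ST T, ∀ c, c < 2 → ¬ ((s + t + c : ℕ) : ZMod N) = 0 := by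
    intro s hs t ht c hc h0
    have := ST_bounds H hs
    have := ST_bounds H ht
    rw [ZMod.natCast_eq_zero_iff] at h0
    have := Nat.le_of_dvd (by omega) h0
    omega
  have sum1 : ∀ s ∈ ST T, ∀ t ∈ ST T, ¬ ((s + t : ℕ) : ZMod N) = (1 : ℕ) := by
    intro s hs t ht h0
    have := ST_bounds H hs
    have := ST_bounds H ht
    have := cast_inj N (by omega) (by omega) h0
    omega
  have adj : ∀ s ∈ ST T, ∀ t ∈ ST T, ¬ ((s + 1 : ℕ) : ZMod N) = (t : ZMod N) := by
    intro s hs t ht h0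
    have := ST_bounds H hs
    have := ST_bounds H ht
    have := cast_inj N (by omega) (by omega) h0
    subst this
    exact ST_nonadj hs ht
  rw [mem_BS] at hx hx'
  rcases hx with rfl | ⟨s, hs, rfl⟩ | ⟨s, hs, rfl⟩ <;>
  rcases hx' with h0 | ⟨t, ht, he⟩ | ⟨t, ht, he⟩
  · have := cast_inj N (a := 1) (b := 0) (by omega) (by omega) (by simpa using h0)
    omega
  · exact no1 t ht (by simpa using he)
  · exact nom1 t ht (by rw [zero_add] at he; rw [← he]; simp)
  · exact nom1 s hs (eq_neg_of_add_eq_zero_left h0)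
  · exact adj s hs t ht (by push_cast; exact he.symm)
  · exact sum s hs t ht 1 (by omega) (by push_cast; linear_combination -he)
  · exact no1 s hs (by linear_combination -h0)
  · exact sum1 s hs t ht (by push_cast; linear_combination he)
  · exact adj t ht s hs (by push_cast; linear_combination -he)

lemma phi_adj (H : TData h v T) (hN : N = 2 * (v + h) + 1) {i j : ℕ} (hi : 1 ≤ i ∧ i ≤ 2 * v)
    (hj : 1 ≤ j ∧ j ≤ 2 * v) (hij : phi v N T i + 1 = phi v N T j) :
    (j = i + 1 ∧ i < v ∧ i ∉ T) ∨ (∃ k, 1 ≤ k ∧ k < v ∧ k ∉ T ∧ i = k + 1 + v ∧ j = k + v) ∨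
    (i = v ∧ j = 2 * v) := by
  unfold phi at hij
  split_ifs at hij with h1 h2 h2
  · have := fT_le H h1; have := fT_le H h2
    have := cast_inj N (a := fT T i + 1) (b := fT T j) (by have := H.hv; omega) (by omega) (by push_cast; exact hij)
    have := fT_adj this.symm
    exact Or.inl ⟨this.1, by omega, this.2⟩
  · have b1 := fT_le H h1; have b2 := fT_le H (show j - v ≤ v by omega)
    have := fT_ge T i
    have := Nat.le_of_dvd (by omega) (cast_neg (a := fT T i + 1) (by push_cast; exact hij))
    have := fT_eq_v H (show fT T i = v + h by omega)
    have := fT_eq_v H (show fT T (j - v) = v + h by omega)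
    omega
  · have b1 := fT_le H h2; have b2 := fT_le H (show i - v ≤ v by omega)
    have := fT_ge T j
    have := fT_ge T (i - v)
    have := cast_inj N (a := fT T j + fT T (i - v)) (b := 1) (by omega) (by omega)
      (by push_cast; linear_combination -hij)
    omega
  · have := fT_le H (show j - v ≤ v by omega); have := fT_le H (show i - v ≤ v by omega)
    have := cast_inj N (a := fT T (j - v) + 1) (b := fT T (i - v)) (by have := H.hv; omega) (by omega)
      (by push_cast; linear_combination hij)
    have := fT_adj this.symm
    exact Or.inr (Or.inl ⟨j - v, by omega, by omega, this.2, by omega, by omega⟩)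

lemma phi_succ {j : ℕ} (hj : j < v) (hT : j ∉ T) : phi v N T (j + 1) = phi v N T j + 1 := by
  unfold phi
  rw [if_pos (by omega), if_pos (by omega), fT_succ]
  simp [hT]

-- recovering T from S
def gS (S : Finset ℕ) : Finset ℕ := S.image (fun s => s - (S.filter (· ≤ s)).card)

lemma gS_ST : gS (ST T) = T := by
  unfold gS
  conv_rhs => rw [← Finset.image_id (s := T)]
  conv_lhs => rw [ST, Finset.image_image]
  apply Finset.image_congr
  intro t ht
  simp only [Function.comp, id]
  have : ((T.image (fun t => fT T t + 1)).filter (· ≤ fT T t + 1)).card = (T.filter (· < t)).card + 1 := by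
    rw [Finset.filter_image, Finset.card_image_of_injective _
      (fun a b hab => (fT_strictMono T).injective (by simpa using hab))]
    have : T.filter (fun a => fT T a + 1 ≤ fT T t + 1) = insert t (T.filter (· < t)) := by
      ext x
      simp only [Finset.mem_filter, Finset.mem_insert, add_le_add_iff_right,
        (fT_strictMono T).le_iff_le]
      constructor
      · rintro ⟨h1, h2⟩; rcases h2.lt_or_eq with h3 | h3
        · exact Or.inr ⟨h1, h3⟩
        · exact Or.inl h3
      · rintro (rfl | ⟨h1, h2⟩)
        · exact ⟨ht, le_rfl⟩
        · exact ⟨h1, h2.le⟩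
    rw [this, Finset.card_insert_of_notMem (by simp)]
  rw [this]; unfold fT; omega

lemma exists_T {S : Finset ℕ} (hv : 1 ≤ v) (hc : S.card = h)
    (hb : ∀ s ∈ S, 2 ≤ s ∧ s + 1 ≤ v + h) (hadj : ∀ s ∈ S, s + 1 ∉ S) :
    ∃ T, TData h v T ∧ ST T = S := by
  set c : ℕ → ℕ := fun s => s - (S.filter (· ≤ s)).card with hcdef
  -- complement count
  have hcc : ∀ s, c s = ((Finset.Icc 1 s).filter (· ∉ S)).card ∧ c s + (S.filter (· ≤ s)).card = s := by
    intro s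
    have h1 : ((Finset.Icc 1 s).filter (· ∈ S)) = S.filter (· ≤ s) := by
      ext x; simp only [Finset.mem_filter, Finset.mem_Icc]
      constructor
      · rintro ⟨⟨_, h2⟩, h3⟩; exact ⟨h3, h2⟩
      · rintro ⟨h2, h3⟩; exact ⟨⟨by have := hb x h2; omega, h3⟩, h2⟩
    have h2 := Finset.card_filter_add_card_filter_not (s := Finset.Icc 1 s) (· ∈ S)
    rw [h1] at h2
    simp only [Nat.card_Icc] at h2
    simp only [hcdef]
    omega
  have hlt : ∀ s s', s < s' → (s + 1 ∉ S) → c s < c s' := by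
    intro s s' hs hn
    rw [(hcc s).1, (hcc s').1]
    apply Finset.card_lt_card
    rw [Finset.ssubset_iff_of_subset]
    · exact ⟨s + 1, by simp [hn]; omega, by simp⟩
    · intro x; simp only [Finset.mem_filter, Finset.mem_Icc]; rintro ⟨h1, h2⟩; exact ⟨by omega, h2⟩
  have hmono : ∀ s ∈ S, ∀ s' ∈ S, (c s < c s' ↔ s < s') := by
    intro s hs s' hs'
    constructor
    · intro hh
      by_contra hn
      rcases (not_lt.1 hn).lt_or_eq with h1 | h1
      · have := hlt s' s h1 (hadj s' hs'); omega
      · rw [h1] at hh; omega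
    · intro hh; exact hlt s s' hh (hadj s hs)
  have hinj : Set.InjOn c S := by
    intro s hs s' hs' he
    rcases lt_trichotomy s s' with h1 | h1 | h1
    · have := (hmono s hs s' hs').2 h1; omega
    · exact h1
    · have := (hmono s' hs' s hs).2 h1; omega
  refine ⟨S.image c, ⟨hv, ?_, ?_⟩, ?_⟩
  · intro t ht
    rw [Finset.mem_image] at ht
    obtain ⟨s, hs, rfl⟩ := ht
    have hbs := hb s hs
    constructor
    · rw [(hcc s).1, Nat.one_le_iff_ne_zero, Finset.card_ne_zero]
      refine ⟨1, ?_⟩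
      simp only [Finset.mem_filter, Finset.mem_Icc]
      refine ⟨by omega, fun h1 => ?_⟩
      have := hb 1 h1; omega
    · have h1 := hlt s (v + h) (by omega) (hadj s hs)
      have h2 := (hcc (v + h)).2
      rw [Finset.filter_true_of_mem (fun x hx => by have := hb x hx; omega), hc] at h2
      omega
  · rw [Finset.card_image_of_injOn hinj, hc]
  · rw [ST, Finset.image_image]
    conv_rhs => rw [← Finset.image_id (s := S)]
    apply Finset.image_congr
    intro s hs
    simp only [Function.comp, id, fT]
    rw [Finset.filter_image, Finset.card_image_of_injOn (hinj.mono (by intro x hx; simp at hx; exact hx.1))]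
    have e1 : S.filter (fun a => c a < c s) = S.filter (· < s) := by
      apply Finset.filter_congr; intro x hx; exact hmono x hx s hs
    have e2 : S.filter (· ≤ s) = insert s (S.filter (· < s)) := by
      ext x
      simp only [Finset.mem_filter, Finset.mem_insert]
      constructor
      · rintro ⟨h1, h2⟩; rcases h2.lt_or_eq with h3 | h3
        · exact Or.inr ⟨h1, h3⟩
        · exact Or.inl h3
      · rintro (rfl | ⟨h1, h2⟩)
        · exact ⟨hs, le_rfl⟩
        · exact ⟨h1, h2.le⟩
    have e3 := (hcc s).2
    rw [e2, Finset.card_insert_of_notMem (by simp)] at e3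
    rw [e1]
    omega

end Refl

namespace Refl
variable {h v N : ℕ} {T : Finset ℕ}

lemma lin_uniq {d M : ℕ} {Q : Finset (Finset ℕ)} (hQ : IsLinearDiagram M d Q) {b b' : Finset ℕ}
    (hb : b ∈ Q) (hb' : b' ∈ Q) {x : ℕ} (hx : x ∈ b) (hx' : x ∈ b') : b = b' :=
  (hQ.2.2 x (hQ.2.1 b hb x hx)).unique ⟨hb, hx⟩ ⟨hb', hx'⟩

lemma ch_uniq {d : ℕ} {P : Finset (Finset (ZMod N))} (hP : IsChordDiagram N d P)
    {b b' : Finset (ZMod N)}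
    (hb : b ∈ P) (hb' : b' ∈ P) {x : ZMod N} (hx : x ∈ b) (hx' : x ∈ b') : b = b' :=
  (hP.2 x).unique ⟨hb, hx⟩ ⟨hb', hx'⟩

def mk (v N : ℕ) (Q : Finset (Finset ℕ)) (T : Finset ℕ) : Finset (Finset (ZMod N)) :=
  insert (BS N (ST T)) (Q.image (fun b => b.image (phi v N T)))

lemma mem_mk {Q : Finset (Finset ℕ)} {b : Finset (ZMod N)} :
    b ∈ mk v N Q T ↔ b = BS N (ST T) ∨ ∃ c ∈ Q, c.image (phi v N T) = b := by
  simp [mk]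

lemma zero_mem_BS {S : Finset ℕ} : (0 : ZMod N) ∈ BS N S := by simp [BS]

lemma shift_mem {i : ℕ} (hi : 1 ≤ i ∧ i ≤ 2 * v) :
    1 ≤ shiftMod (2 * v) v i ∧ shiftMod (2 * v) v i ≤ 2 * v := by
  unfold shiftMod; split_ifs <;> omega

lemma no_sym {Q : Finset (Finset ℕ)} (hv : 1 ≤ v) (hQ : IsMSymLinear (2 * h + 1) 2 v Q)
    {b : Finset ℕ} (hb : b ∈ Q) (h1 : v ∈ b) (h2 : 2 * v ∈ b) : False := by
  have hs := hQ.2 b hb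
  have hm : 2 * v ∈ b.image (shiftMod (2 * v) v) := by
    rw [Finset.mem_image]; exact ⟨v, h1, by unfold shiftMod; split_ifs <;> omega⟩
  have he := lin_uniq hQ.1 hs hb hm h2
  have hsum : ∑ x ∈ b, (1 : ZMod 2) = 0 := by
    apply Finset.sum_involution (fun a _ => shiftMod (2 * v) v a)
    · intros; rfl
    · intro a ha _
      have := hQ.1.2.1 b hb a ha
      rw [Finset.mem_Icc] at this
      unfold shiftMod; split_ifs <;> omega
    · intro a ha
      have h3 := Finset.mem_image_of_mem (shiftMod (2 * v) v) ha
      rwa [he] at h3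
    · intro a ha
      have := hQ.1.2.1 b hb a ha
      rw [Finset.mem_Icc] at this
      unfold shiftMod; split_ifs <;> omega
  have hc := hQ.1.1 b hb
  rw [Finset.sum_const, hc, nsmul_eq_mul, mul_one, ZMod.natCast_eq_zero_iff] at hsum
  omega

lemma mk_good (H : TData h v T) (hN : N = 2 * (v + h) + 1) {Q : Finset (Finset ℕ)}
    (hQ : IsMSymLinear (2 * h + 1) 2 v Q)
    (hL : ∀ j, 1 ≤ j → j < v → (∃ b ∈ Q, j ∈ b ∧ j + 1 ∈ b) → j ∈ T) :
    IsChordDiagram N (2 * h + 1) (mk v N Q T) ∧ ChordLoopless N (mk v N Q T) ∧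
      ∀ b ∈ mk v N Q T, b.image (fun i => -i) ∈ mk v N Q T := by
  have hA : ∀ b ∈ Q, ∀ x ∈ b, 1 ≤ x ∧ x ≤ 2 * v := fun b hb x hx =>
    Finset.mem_Icc.1 (hQ.1.2.1 b hb x hx)
  refine ⟨⟨?_, ?_⟩, ?_, ?_⟩
  · intro b hb
    rw [mem_mk] at hb
    rcases hb with rfl | ⟨c, hc, rfl⟩
    · rw [BS_card hN (fun s hs => by have := ST_bounds H hs; omega), ST_card, H.card]
    · rw [Finset.card_image_of_injOn, hQ.1.1 c hc]
      intro x hx y hy hxy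
      exact phi_inj H hN (hA c hc x hx) (hA c hc y hy) hxy
  · intro x
    by_cases hx : x ∈ BS N (ST T)
    · refine ⟨BS N (ST T), ⟨mem_mk.2 (Or.inl rfl), hx⟩, ?_⟩
      rintro b ⟨hb, hxb⟩
      rw [mem_mk] at hb
      rcases hb with rfl | ⟨c, hc, rfl⟩
      · rfl
      · rw [Finset.mem_image] at hxb
        obtain ⟨i, hi, rfl⟩ := hxb
        exact absurd hx (phi_not_BS H hN (hA c hc i hi))
    · obtain ⟨i, hi, rfl⟩ := phi_cover H hN x hx
      obtain ⟨c, ⟨hc, hic⟩, _⟩ := hQ.1.2.2 i (Finset.mem_Icc.2 hi)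
      refine ⟨c.image (phi v N T), ⟨mem_mk.2 (Or.inr ⟨c, hc, rfl⟩), Finset.mem_image_of_mem _ hic⟩, ?_⟩
      rintro b ⟨hb, hxb⟩
      rw [mem_mk] at hb
      rcases hb with rfl | ⟨c', hc', rfl⟩
      · exact absurd hxb hx
      · rw [Finset.mem_image] at hxb
        obtain ⟨j, hj, he⟩ := hxb
        have := phi_inj H hN (hA c' hc' j hj) hi he
        subst this
        rw [lin_uniq hQ.1 hc hc' hic hj]
  · intro x b hb hx hx'
    rw [mem_mk] at hb
    rcases hb with rfl | ⟨c, hc, rfl⟩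
    · exact BS_nonadj H hN hx hx'
    · rw [Finset.mem_image] at hx hx'
      obtain ⟨i, hi, rfl⟩ := hx
      obtain ⟨j, hj, he⟩ := hx'
      have bi := hA c hc i hi
      rcases phi_adj H hN bi (hA c hc j hj) he.symm with
        ⟨h1, h2, h3⟩ | ⟨k, h1, h2, h3, rfl, rfl⟩ | ⟨h1, h2⟩
      · exact h3 (hL i bi.1 h2 ⟨c, hc, hi, h1 ▸ hj⟩)
      · refine h3 (hL k h1 h2 ⟨_, hQ.2 c hc, ?_, ?_⟩)
        · rw [Finset.mem_image]; exact ⟨_, hj, by unfold shiftMod; split_ifs <;> omega⟩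
        · rw [Finset.mem_image]; exact ⟨_, hi, by unfold shiftMod; split_ifs <;> omega⟩
      · exact no_sym H.hv hQ hc (h1 ▸ hi) (h2 ▸ hj)
  · intro b hb
    rw [mem_mk] at hb ⊢
    rcases hb with rfl | ⟨c, hc, rfl⟩
    · left
      ext x
      rw [Finset.mem_image]
      constructor
      · rintro ⟨y, hy, rfl⟩; exact BS_neg hy
      · intro hx; exact ⟨-x, BS_neg hx, by simp⟩
    · right
      refine ⟨_, hQ.2 c hc, ?_⟩
      rw [Finset.image_image, Finset.image_image]
      apply Finset.image_congr
      intro i hi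
      exact phi_shift H (hA c hc i hi)

lemma BS_inj {M : ℕ} (hN : N = 2 * M + 1) {S S' : Finset ℕ} (hS : ∀ s ∈ S, 1 ≤ s ∧ s ≤ M)
    (hS' : ∀ s ∈ S', 1 ≤ s ∧ s ≤ M) (he : BS N S = BS N S') : S ⊆ S' := by
  intro s hs
  have bs := hS s hs
  have : (s : ZMod N) ∈ BS N S' := by rw [← he, mem_BS]; exact Or.inr (Or.inl ⟨s, hs, rfl⟩)
  rw [mem_BS] at this
  rcases this with h0 | ⟨t, ht, h0⟩ | ⟨t, ht, h0⟩
  · rw [ZMod.natCast_eq_zero_iff] at h0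
    have := Nat.le_of_dvd (by omega) h0
    omega
  · have := hS' t ht
    have := cast_inj N (by omega) (by omega) h0
    exact this ▸ ht
  · have := hS' t ht
    have := Nat.le_of_dvd (by omega) (cast_neg h0.symm)
    omega

lemma image_phi_inj (H : TData h v T) (hN : N = 2 * (v + h) + 1) {b c : Finset ℕ}
    (hb : ∀ x ∈ b, 1 ≤ x ∧ x ≤ 2 * v) (hc : ∀ x ∈ c, 1 ≤ x ∧ x ≤ 2 * v)
    (he : b.image (phi v N T) = c.image (phi v N T)) : b ⊆ c := by
  intro x hx
  have := Finset.mem_image_of_mem (phi v N T) hx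
  rw [he, Finset.mem_image] at this
  obtain ⟨y, hy, hxy⟩ := this
  have := phi_inj H hN (hc y hy) (hb x hx) hxy
  exact this ▸ hy

lemma mk_Q_sub (H : TData h v T) (hN : N = 2 * (v + h) + 1) {Q Q' : Finset (Finset ℕ)}
    (hQ : IsLinearDiagram (2 * v) (2 * h + 1) Q) (hQ' : IsLinearDiagram (2 * v) (2 * h + 1) Q')
    (he : mk v N Q T = mk v N Q' T) : Q ⊆ Q' := by
  intro b hb
  have hA := fun x hx => Finset.mem_Icc.1 (hQ.2.1 b hb x hx)
  have h1 : b.image (phi v N T) ∈ mk v N Q' T := by rw [← he, mem_mk]; exact Or.inr ⟨b, hb, rfl⟩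
  rw [mem_mk] at h1
  rcases h1 with h1 | ⟨c, hc, h1⟩
  · have := zero_mem_BS (N := N) (S := ST T)
    rw [← h1, Finset.mem_image] at this
    obtain ⟨i, hi, h2⟩ := this
    exact absurd (h2 ▸ zero_mem_BS) (phi_not_BS H hN (hA i hi))
  · have hA' := fun x hx => Finset.mem_Icc.1 (hQ'.2.1 c hc x hx)
    have : b = c := Finset.Subset.antisymm (image_phi_inj H hN hA hA' h1.symm)
      (image_phi_inj H hN hA' hA h1)
    exact this ▸ hc

lemma mk_inj {T' : Finset ℕ} (H : TData h v T) (H' : TData h v T') (hN : N = 2 * (v + h) + 1)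
    {Q Q' : Finset (Finset ℕ)}
    (hQ : IsLinearDiagram (2 * v) (2 * h + 1) Q) (hQ' : IsLinearDiagram (2 * v) (2 * h + 1) Q')
    (hP : IsChordDiagram N (2 * h + 1) (mk v N Q T))
    (he : mk v N Q T = mk v N Q' T') : Q = Q' ∧ T = T' := by
  have h1 : BS N (ST T) = BS N (ST T') :=
    ch_uniq hP (mem_mk.2 (Or.inl rfl)) (he ▸ mem_mk.2 (Or.inl rfl)) zero_mem_BS zero_mem_BS
  have b1 : ∀ s ∈ ST T, 1 ≤ s ∧ s ≤ v + h := fun s hs => by have := ST_bounds H hs; omega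
  have b2 : ∀ s ∈ ST T', 1 ≤ s ∧ s ≤ v + h := fun s hs => by have := ST_bounds H' hs; omega
  have h2 : ST T = ST T' := Finset.Subset.antisymm (BS_inj hN b1 b2 h1) (BS_inj hN b2 b1 h1.symm)
  have h3 : T = T' := by rw [← gS_ST (T := T), h2, gS_ST]
  subst h3
  exact ⟨Finset.Subset.antisymm (mk_Q_sub H hN hQ hQ' he) (mk_Q_sub H hN hQ' hQ he.symm), rfl⟩

lemma mk_surj (hv : 1 ≤ v) (hN : N = 2 * (v + h) + 1) {P : Finset (Finset (ZMod N))}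
    (hP : IsChordDiagram N (2 * h + 1) P) (hl : ChordLoopless N P)
    (hs : ∀ b ∈ P, b.image (fun i => -i) ∈ P) :
    ∃ Q T, TData h v T ∧ IsMSymLinear (2 * h + 1) 2 v Q ∧
      (∀ j, 1 ≤ j → j < v → (∃ b ∈ Q, j ∈ b ∧ j + 1 ∈ b) → j ∈ T) ∧ mk v N Q T = P := by
  obtain ⟨B, ⟨hB, h0B⟩, -⟩ := hP.2 0
  have hBneg : ∀ x ∈ B, -x ∈ B := by
    intro x hx
    have : B.image (fun i => -i) = B := ch_uniq hP (hs B hB) hB (x := 0)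
      (Finset.mem_image.2 ⟨0, h0B, by simp⟩) h0B
    rw [← this]
    exact Finset.mem_image_of_mem _ hx
  set S := (Finset.Icc 1 (v + h)).filter (fun a : ℕ => (a : ZMod N) ∈ B) with hS
  have memS : ∀ a : ℕ, a ∈ S ↔ (1 ≤ a ∧ a ≤ v + h) ∧ (a : ZMod N) ∈ B := by
    intro a; simp [hS]
  have hBS : BS N S = B := by
    ext x
    rw [mem_BS]
    constructor
    · rintro (rfl | ⟨s, hs, rfl⟩ | ⟨s, hs, rfl⟩)
      · exact h0B
      · exact ((memS s).1 hs).2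
      · exact hBneg _ ((memS s).1 hs).2
    · intro hx
      rcases cast_cover hN x with h | ⟨a, h1, h2, rfl | rfl⟩
      · exact Or.inl h
      · exact Or.inr (Or.inl ⟨a, (memS a).2 ⟨⟨h1, h2⟩, hx⟩, rfl⟩)
      · exact Or.inr (Or.inr ⟨a, (memS a).2 ⟨⟨h1, h2⟩, by simpa using hBneg _ hx⟩, rfl⟩)
  have hSc : S.card = h := by
    have := hP.1 B hB
    rw [← hBS, BS_card hN (fun s hs => ((memS s).1 hs).1)] at this
    omega
  obtain ⟨T, H, hT⟩ := exists_T (v := v) hv hSc (by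
    intro s hs
    have h1 := (memS s).1 hs
    constructor
    · by_contra hn
      have : s = 1 := by omega
      subst this
      exact hl 0 B hB h0B (by simpa using h1.2)
    · by_contra hn
      have : s = v + h := by omega
      subst this
      refine hl _ B hB h1.2 ?_
      have h2 := hBneg _ h1.2
      convert h2 using 1
      have h3 : ((N : ℕ) : ZMod N) = 0 := by simp
      have h4 : ((2 * (v + h) + 1 : ℕ) : ZMod N) = 0 := by rw [← hN]; exact h3
      push_cast at h4 ⊢
      linear_combination h4) (by
    intro s hs hs'
    exact hl _ B hB ((memS s).1 hs).2 (by simpa using ((memS _).1 hs').2))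
  rw [← hT] at hBS
  subst hBS
  set pb : Finset (ZMod N) → Finset ℕ :=
    fun b => (Finset.Icc 1 (2 * v)).filter (fun i => phi v N T i ∈ b) with hpb
  have mempb : ∀ b i, i ∈ pb b ↔ (1 ≤ i ∧ i ≤ 2 * v) ∧ phi v N T i ∈ b := by
    intro b i; simp [hpb]
  have hpi : ∀ b ∈ P, b ≠ BS N (ST T) → (pb b).image (phi v N T) = b := by
    intro b hb hne
    ext x
    rw [Finset.mem_image]
    constructor
    · rintro ⟨i, hi, rfl⟩; exact ((mempb _ _).1 hi).2
    · intro hx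
      obtain ⟨i, hi, rfl⟩ := phi_cover H hN x (fun hx' => hne (ch_uniq hP hb hB hx hx'))
      exact ⟨i, (mempb _ _).2 ⟨hi, hx⟩, rfl⟩
  refine ⟨(P.erase (BS N (ST T))).image pb, T, H, ⟨⟨?_, ?_, ?_⟩, ?_⟩, ?_, ?_⟩
  · intro c hc
    simp only [Finset.mem_image, Finset.mem_erase] at hc
    obtain ⟨b, ⟨hne, hb⟩, rfl⟩ := hc
    have h1 := hP.1 b hb
    rw [← hpi b hb hne, Finset.card_image_of_injOn] at h1
    · exact h1
    · intro x hx y hy hxy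
      exact phi_inj H hN ((mempb _ _).1 hx).1 ((mempb _ _).1 hy).1 hxy
  · intro c hc
    simp only [Finset.mem_image, Finset.mem_erase] at hc
    obtain ⟨b, ⟨hne, hb⟩, rfl⟩ := hc
    intro x hx
    exact Finset.mem_Icc.2 ((mempb _ _).1 hx).1
  · intro i hi
    rw [Finset.mem_Icc] at hi
    obtain ⟨b, ⟨hb, hib⟩, -⟩ := hP.2 (phi v N T i)
    have hne : b ≠ BS N (ST T) := by rintro rfl; exact phi_not_BS H hN hi hib
    refine ⟨pb b, ⟨Finset.mem_image_of_mem _ (Finset.mem_erase.2 ⟨hne, hb⟩),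
      (mempb _ _).2 ⟨hi, hib⟩⟩, ?_⟩
    rintro c ⟨hc, hic⟩
    simp only [Finset.mem_image, Finset.mem_erase] at hc
    obtain ⟨b', ⟨hne', hb'⟩, rfl⟩ := hc
    rw [ch_uniq hP hb hb' hib ((mempb _ _).1 hic).2]
  · intro c hc
    simp only [Finset.mem_image, Finset.mem_erase] at hc
    obtain ⟨b, ⟨hne, hb⟩, rfl⟩ := hc
    rw [Finset.mem_image]
    refine ⟨b.image (fun i => -i), Finset.mem_erase.2 ⟨?_, hs b hb⟩, ?_⟩
    · intro he
      have h1 : (0 : ZMod N) ∈ b.image (fun i => -i) := he ▸ zero_mem_BS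
      rw [Finset.mem_image] at h1
      obtain ⟨x, hx, hx0⟩ := h1
      rw [neg_eq_zero] at hx0
      subst hx0
      exact hne (ch_uniq hP hb hB hx zero_mem_BS)
    · ext i
      rw [mempb, Finset.mem_image, Finset.mem_image]
      constructor
      · rintro ⟨hi, x, hx, hxi⟩
        refine ⟨shiftMod (2 * v) v i, (mempb _ _).2 ⟨shift_mem hi, ?_⟩, ?_⟩
        · rw [phi_shift H hi, ← hxi]; simpa using hx
        · unfold shiftMod; split_ifs <;> omega
      · rintro ⟨j, hj, rfl⟩
        rw [mempb] at hj
        refine ⟨shift_mem hj.1, _, hj.2, ?_⟩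
        rw [phi_shift H hj.1]
  · rintro j h1 h2 ⟨c, hc, hj, hj'⟩
    simp only [Finset.mem_image, Finset.mem_erase] at hc
    obtain ⟨b, ⟨hne, hb⟩, rfl⟩ := hc
    by_contra hn
    have h3 := ((mempb _ _).1 hj').2
    rw [phi_succ h2 hn] at h3
    exact hl _ b hb ((mempb _ _).1 hj).2 h3
  · ext b
    rw [mem_mk]
    constructor
    · rintro (rfl | ⟨c, hc, rfl⟩)
      · exact hB
      · simp only [Finset.mem_image, Finset.mem_erase] at hc
        obtain ⟨b, ⟨hne, hb⟩, rfl⟩ := hc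
        rw [hpi b hb hne]; exact hb
    · intro hb
      by_cases hne : b = BS N (ST T)
      · exact Or.inl hne
      · exact Or.inr ⟨pb b, Finset.mem_image_of_mem _ (Finset.mem_erase.2 ⟨hne, hb⟩), hpi b hb hne⟩

open Classical in
noncomputable def LQ (v : ℕ) (Q : Finset (Finset ℕ)) : Finset ℕ :=
  (Finset.Icc 1 (v - 1)).filter (fun j => ∃ b ∈ Q, j ∈ b ∧ j + 1 ∈ b)

lemma mem_LQ {Q : Finset (Finset ℕ)} {j : ℕ} :
    j ∈ LQ v Q ↔ (1 ≤ j ∧ j ≤ v - 1) ∧ ∃ b ∈ Q, j ∈ b ∧ j + 1 ∈ b := by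
  simp [LQ]

lemma sector0 {Q : Finset (Finset ℕ)} (hv : 1 ≤ v) : sectorLoops v Q 0 = (LQ v Q).card := by
  unfold sectorLoops
  rw [← Set.ncard_coe_finset]
  congr 1
  ext j
  simp only [Set.mem_ofPred_eq, Finset.mem_coe, mem_LQ, and_assoc]
  constructor
  · rintro ⟨h1, h2, h3⟩; exact ⟨by omega, by omega, h3⟩
  · rintro ⟨h1, h2, h3⟩; exact ⟨by omega, by omega, h3⟩

lemma sector1 {d : ℕ} {Q : Finset (Finset ℕ)} (hv : 1 ≤ v) (hQ : IsMSymLinear d 2 v Q) :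
    sectorLoops v Q 1 = (LQ v Q).card := by
  unfold sectorLoops
  rw [← Finset.card_image_of_injective (LQ v Q) (add_left_injective v), ← Set.ncard_coe_finset]
  congr 1
  ext j
  simp only [Set.mem_ofPred_eq, Finset.mem_coe, Finset.mem_image, mem_LQ]
  constructor
  · rintro ⟨h1, h2, b, hb, hj, hj'⟩
    refine ⟨j - v, ⟨⟨by omega, by omega⟩, _, hQ.2 b hb, ?_, ?_⟩, by omega⟩
    · rw [Finset.mem_image]; exact ⟨_, hj, by unfold shiftMod; split_ifs <;> omega⟩
    · rw [Finset.mem_image]; exact ⟨_, hj', by unfold shiftMod; split_ifs <;> omega⟩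
  · rintro ⟨i, ⟨⟨h1, h2⟩, b, hb, hj, hj'⟩, rfl⟩
    refine ⟨by omega, by omega, _, hQ.2 b hb, ?_, ?_⟩
    · rw [Finset.mem_image]; exact ⟨_, hj, by unfold shiftMod; split_ifs <;> omega⟩
    · rw [Finset.mem_image]; exact ⟨_, hj', by unfold shiftMod; split_ifs <;> omega⟩

open Classical in
noncomputable def symQ (d v : ℕ) : Finset (Finset (Finset ℕ)) :=
  ((Finset.Icc 1 (2 * v)).powerset.powerset).filter (IsMSymLinear d 2 v)

lemma mem_symQ {d : ℕ} {Q : Finset (Finset ℕ)} : Q ∈ symQ d v ↔ IsMSymLinear d 2 v Q := by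
  simp only [symQ, Finset.mem_filter, Finset.mem_powerset, and_iff_right_iff_imp]
  intro hQ b hb
  rw [Finset.mem_powerset]
  exact fun x hx => hQ.1.2.1 b hb x hx

lemma numAtil_eq {d k : ℕ} (hv : 1 ≤ v) :
    numAtil d 2 v k = ((symQ d v).filter (fun Q => (LQ v Q).card = k)).card := by
  unfold numAtil
  rw [← Set.ncard_coe_finset]
  congr 1
  ext Q
  simp only [Set.mem_ofPred_eq, Finset.coe_filter, mem_symQ]
  apply and_congr_right
  intro hQ
  constructor
  · intro hh; rw [← sector0 hv]; exact hh 0 (by omega)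
  · intro hh s hs
    interval_cases s
    · rw [sector0 hv, hh]
    · rw [sector1 hv hQ, hh]

lemma main (hv : 1 ≤ v) (hN : N = 2 * (v + h) + 1) :
    Set.ncard {P : Finset (Finset (ZMod N)) |
        IsChordDiagram N (2 * h + 1) P ∧ ChordLoopless N P ∧
          ∀ b ∈ P, b.image (fun i => -i) ∈ P} =
      ∑ k ∈ Finset.range (h + 1), (v - 1 - k).choose (h - k) * numAtil (2 * h + 1) 2 v k := by
  have hTD : ∀ T, T ∈ (Finset.Icc 1 (v - 1)).powersetCard h ↔ TData h v T := by
    intro T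
    rw [Finset.mem_powersetCard]
    constructor
    · rintro ⟨h1, h2⟩
      exact ⟨hv, fun t ht => by have := Finset.mem_Icc.1 (h1 ht); omega, h2⟩
    · intro H
      exact ⟨fun t ht => Finset.mem_Icc.2 (by have := H.sub t ht; omega), H.card⟩
  have hLT : ∀ Q T, LQ v Q ⊆ T ↔
      ∀ j, 1 ≤ j → j < v → (∃ b ∈ Q, j ∈ b ∧ j + 1 ∈ b) → j ∈ T := by
    intro Q T
    constructor
    · intro hh j h1 h2 h3; exact hh (mem_LQ.2 ⟨⟨h1, by omega⟩, h3⟩)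
    · intro hh j hj; rw [mem_LQ] at hj; exact hh j hj.1.1 (by omega) hj.2
  set I : Finset (Σ _ : Finset (Finset ℕ), Finset ℕ) := (symQ (2 * h + 1) v).sigma
    (fun Q => ((Finset.Icc 1 (v - 1)).powersetCard h).filter (LQ v Q ⊆ ·)) with hI
  have memI : ∀ p, p ∈ I ↔ IsMSymLinear (2 * h + 1) 2 v p.1 ∧ TData h v p.2 ∧ LQ v p.1 ⊆ p.2 := by
    intro p; rw [hI, Finset.mem_sigma, mem_symQ, Finset.mem_filter, hTD]
  have hset : {P : Finset (Finset (ZMod N)) |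
        IsChordDiagram N (2 * h + 1) P ∧ ChordLoopless N P ∧
          ∀ b ∈ P, b.image (fun i => -i) ∈ P} = (fun p : (Σ _ : Finset (Finset ℕ), Finset ℕ) => mk v N p.1 p.2) '' (I : Set _) := by
    ext P
    simp only [Set.mem_ofPred_eq, Set.mem_image, Finset.mem_coe]
    constructor
    · rintro ⟨h1, h2, h3⟩
      obtain ⟨Q, T, H, hQ, hL, he⟩ := mk_surj hv hN h1 h2 h3
      exact ⟨⟨Q, T⟩, (memI _).2 ⟨hQ, H, (hLT _ _).2 hL⟩, he⟩
    · rintro ⟨p, hp, rfl⟩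
      obtain ⟨hQ, H, hL⟩ := (memI _).1 hp
      exact mk_good H hN hQ ((hLT _ _).1 hL)
  rw [hset, Set.ncard_image_of_injOn, Set.ncard_coe_finset]
  · rw [hI, Finset.card_sigma]
    have hcount : ∀ Q ∈ symQ (2 * h + 1) v,
        (((Finset.Icc 1 (v - 1)).powersetCard h).filter (LQ v Q ⊆ ·)).card =
        ∑ k ∈ Finset.range (h + 1), if (LQ v Q).card = k then (v - 1 - k).choose (h - k) else 0 := by
      intro Q _
      rw [Finset.sum_ite_eq]
      split_ifs with hk
      · rw [Finset.mem_range] at hk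
        rw [Finset.card_filter_powersetCard_subset (LQ v Q) _ _ (Finset.filter_subset _ _) (by omega)]
        simp
      · rw [Finset.mem_range] at hk
        rw [Finset.card_eq_zero, Finset.filter_eq_empty_iff]
        intro T hT hL
        have := Finset.card_le_card hL
        rw [(Finset.mem_powersetCard.1 hT).2] at this
        omega
    rw [Finset.sum_congr rfl hcount, Finset.sum_comm]
    apply Finset.sum_congr rfl
    intro k _
    rw [numAtil_eq hv, ← Finset.sum_filter, Finset.sum_const, smul_eq_mul, mul_comm]
  · rintro ⟨Q, T⟩ hp ⟨Q', T'⟩ hp' he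
    obtain ⟨hQ, H, hL⟩ := (memI _).1 hp
    obtain ⟨hQ', H', hL'⟩ := (memI _).1 hp'
    obtain ⟨h1, h2⟩ := mk_inj H H' hN hQ.1 hQ'.1 (mk_good H hN hQ ((hLT _ _).1 hL)).1 he
    simp only at h1 h2
    subst h1; subst h2; rfl

end Refl

/-- for odd `d ≥ 3` and odd `n ≥ 3`, the number of loopless generalized
chord diagrams of order `(n,d)` invariant under `i ↦ −i`. -/
theorem reflection_one_fixed_point (d : ℕ) (hd : 3 ≤ d) (hdo : Odd d)
    (n : ℕ) (hn : 3 ≤ n) (hno : Odd n) :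
    Set.ncard {P : Finset (Finset (ZMod (n * d))) |
        IsChordDiagram (n * d) d P ∧ ChordLoopless (n * d) P ∧
          ∀ b ∈ P, b.image (fun i => -i) ∈ P} =
      ∑ k ∈ Finset.range ((d - 1) / 2 + 1),
        (d * (n - 1) / 2 - 1 - k).choose ((d - 1) / 2 - k) *
          numAtil d 2 (d * (n - 1) / 2) k := by
  obtain ⟨h, rfl⟩ := hdo
  obtain ⟨m, rfl⟩ := hno
  have e1 : (2 * h + 1) * (2 * m + 1 - 1) / 2 = (2 * h + 1) * m := by
    rw [Nat.add_sub_cancel, show (2 * h + 1) * (2 * m) = 2 * ((2 * h + 1) * m) by ring]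
    simp
  have e2 : (2 * h + 1 - 1) / 2 = h := by simp
  rw [e1, e2]
  exact Refl.main (Nat.mul_pos (by omega) (by omega)) (by ring)
end
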